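/- arXiv:2602.20111 — 8 statements merged into one kernel-verified Lean document; each statement's English description precedes it below -/
import Mathlib

section
/- Let 𝒳 be the set of finite sequences over ℕ (the nodes of a rooted tree of infinite depth in which every node has infinitely many children, a node v being an ancestor of x exactly when v is a proper prefix of x). For each x ∈ 𝒳 define f_x : 𝒳 → {+1,−1} by f_x(v) = +1 if v is a prefix of x (equivalently, v lies on the path from the root to x) and f_x(v) = −1 otherwise, and let 𝒞 = {f_x : x ∈ 𝒳}. Then the VC dimension of 𝒞 equals 1: there exists a one-element subset of 𝒳 shattered by 𝒞, and no two-element subset of 𝒳 is shattered by 𝒞. -/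
/-- A finite set `A ⊆ 𝒳` is shattered by a concept class `C ⊆ {+1,−1}^𝒳` if every
`±1`-labeling of `A` is realized by some concept in `C`. -/
def Shatters (C : Set (List ℕ → ℤ)) (A : Finset (List ℕ)) : Prop :=
  ∀ τ : List ℕ → ℤ, (∀ a ∈ A, τ a = 1 ∨ τ a = -1) →
    ∃ h ∈ C, ∀ a ∈ A, h a = τ a

/-- The concept associated to a node `x` of the infinite tree (nodes are finite sequences
over ℕ): `+1` on prefixes of `x` (the path from the root to `x`), `−1` elsewhere. -/
def pathConcept (x : List ℕ) : List ℕ → ℤ :=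
  fun v => if v <+: x then 1 else -1

/-- The class `𝒞 = {f_x : x ∈ 𝒳}` of root-to-node paths in the infinite tree has
VC dimension exactly 1: some one-element subset is shattered, and no two-element
subset is shattered. -/
theorem stmt0 :
    (∃ A : Finset (List ℕ), A.card = 1 ∧
        Shatters {f | ∃ x : List ℕ, f = pathConcept x} A) ∧
    (∀ A : Finset (List ℕ), A.card = 2 →
        ¬ Shatters {f | ∃ x : List ℕ, f = pathConcept x} A) := by
  have key : ∀ a b : List ℕ, a ≠ b → a <+: b → ∀ A : Finset (List ℕ), a ∈ A → b ∈ A →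
      ¬ Shatters {f | ∃ x : List ℕ, f = pathConcept x} A := by
    intro a b hab hp A ha hb hS
    obtain ⟨h, ⟨x, rfl⟩, hx⟩ := hS (fun v => if v = b then 1 else -1)
      (by intro v _; by_cases hv : v = b <;> simp [hv])
    have h1 := hx a ha
    have h2 := hx b hb
    have hbx : b <+: x := by
      by_contra hc
      simp [pathConcept, hc] at h2
    have hax : a <+: x := hp.trans hbx
    simp [pathConcept, hax, hab] at h1
  refine ⟨⟨{[0]}, by simp, ?_⟩, ?_⟩
  · intro τ hτ
    rcases hτ [0] (by simp) with h | h
    · exact ⟨_, ⟨[0], rfl⟩, by simp [pathConcept, h]⟩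
    · exact ⟨_, ⟨[], rfl⟩, by simp [pathConcept, h]⟩
  · intro A hA hS
    obtain ⟨a, b, hab, rfl⟩ := Finset.card_eq_two.mp hA
    obtain ⟨h, ⟨x, rfl⟩, hx⟩ := hS (fun _ => 1) (by simp)
    have h1 : a <+: x := by
      by_contra hc
      have := hx a (by simp)
      simp [pathConcept, hc] at this
    have h2 : b <+: x := by
      by_contra hc
      have := hx b (by simp)
      simp [pathConcept, hc] at this
    rcases List.prefix_or_prefix_of_prefix h1 h2 with h | h
    · exact key a b hab h _ (by simp) (by simp) hS
    · exact key b a hab.symm h _ (by simp) (by simp) hS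
end

section
/- Fix an integer k ≥ 1 and a real c > 0, and let f be a function mapping pairs (U; V), where U is a size-k set of labeled examples and V ⊆ 𝒞, into [0, c], satisfying the Monotonicity property. For such f, the leave-k-out potential of a finite labeled set S is ρ_f(S) := Σ_{U ⊆ S, |U| = k} f(U; 𝒱(S∖U)). Then for every finite set S of labeled examples and every labeled example z ∉ S such that S ∪ {z} is realizable, ρ_f(S ∪ {z}) ≤ ρ_f(S) + c·C(|S|, k−1), where C(n, r) denotes the binomial coefficient. -/
/-! Basic notions for learning with a concept class `C ⊆ {+1,−1}^𝒳`.  Labeled examples are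
pairs in `𝒳 × ℤ` (with labels `±1`). -/

variable {X : Type*}

/-- `h` is consistent with a set of labeled examples. -/
def Consistent (h : X → ℤ) (S : Set (X × ℤ)) : Prop := ∀ p ∈ S, h p.1 = p.2

/-- The version space `𝒱(S)` of hypotheses in `C` consistent with `S`. -/
def VSpace (C : Set (X → ℤ)) (S : Set (X × ℤ)) : Set (X → ℤ) := {h ∈ C | Consistent h S}

/-- The restriction `V_{x→y}`. -/
def Restrict (V : Set (X → ℤ)) (x : X) (y : ℤ) : Set (X → ℤ) := {h ∈ V | h x = y}

/-- A labeled example `(x,y)` is realizable in `V` if `V_{x→y} ≠ ∅`. -/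
def RealizableIn (V : Set (X → ℤ)) (x : X) (y : ℤ) : Prop := (Restrict V x y).Nonempty

/-- `V` is a version space for `C`. -/
def IsVersionSpace (C : Set (X → ℤ)) (V : Set (X → ℤ)) : Prop :=
  ∃ S : Set (X × ℤ), V = VSpace C S

/-- Monotonicity of a score function `f` on size-`k` labeled sets: restricting a version
space consistent with `U` by a labeled example jointly realizable with `U` can only
decrease the score. -/
def MonotoneScore (C : Set (X → ℤ)) (k : ℕ) (f : Finset (X × ℤ) → Set (X → ℤ) → ℝ) : Prop :=
  ∀ U : Finset (X × ℤ), U.card = k → ∀ V : Set (X → ℤ), IsVersionSpace C V →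
    (∃ h ∈ V, Consistent h ↑U) →
    ∀ x : X, ∀ y : ℤ, (∃ h ∈ V, Consistent h (insert (x, y) (↑U : Set (X × ℤ)))) →
      f U (Restrict V x y) ≤ f U V

/-- `m`-robustness of a score function `f`: in every size-`m` set `M` labeled by some
`h ∈ C` there are a size-`k` subset `U ⊆ M` and a witness `p ∈ M ∖ U` such that for every
set `A` of labeled examples labeled by `h` with `A ⊇ M ∖ (U ∪ {p})`, flipping the label of
the witness either drops the score of `U` by at least `1`, or makes `U` unrealizable. -/
def RobustScore [DecidableEq X] (C : Set (X → ℤ)) (m k : ℕ)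
    (f : Finset (X × ℤ) → Set (X → ℤ) → ℝ) : Prop :=
  ∀ h ∈ C, ∀ M : Finset (X × ℤ), M.card = m → Consistent h ↑M →
    ∃ U ⊆ M, U.card = k ∧ ∃ p ∈ M, p ∉ U ∧
      ∀ A : Set (X × ℤ), Consistent h A → ↑(M \ insert p U) ⊆ A →
        (1 ≤ f U (VSpace C A) - f U (Restrict (VSpace C A) p.1 (-p.2)) ∨
          ¬ ∃ h' ∈ Restrict (VSpace C A) p.1 (-p.2), Consistent h' ↑U)

/-- `f` is an `(m,c,k)`-good function for `(C, 𝒳)`: it maps size-`k` labeled sets and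
version spaces into `[0, c]`, is monotone, and is `m`-robust. -/
def IsGood [DecidableEq X] (C : Set (X → ℤ)) (m : ℕ) (c : ℝ) (k : ℕ)
    (f : Finset (X × ℤ) → Set (X → ℤ) → ℝ) : Prop :=
  (∀ U : Finset (X × ℤ), U.card = k → ∀ V : Set (X → ℤ), 0 ≤ f U V ∧ f U V ≤ c) ∧
  MonotoneScore C k f ∧ RobustScore C m k f

/-- The leave-`k`-out potential `ρ_f(S) = Σ_{U ⊆ S, |U| = k} f(U; 𝒱(S ∖ U))`. -/
def pot [DecidableEq X] (C : Set (X → ℤ)) (k : ℕ)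
    (f : Finset (X × ℤ) → Set (X → ℤ) → ℝ) (S : Finset (X × ℤ)) : ℝ :=
  ∑ U ∈ S.powersetCard k, f U (VSpace C ↑(S \ U))

/-- One-step potential increase bound: for a bounded monotone score function `f`, adding a
new labeled example `z` to a finite labeled set `S` (with `S ∪ {z}` realizable) increases
the leave-`k`-out potential by at most `c · C(|S|, k−1)`. -/
theorem stmt3 {X : Type*} [DecidableEq X] (C : Set (X → ℤ))
    (hC : ∀ h ∈ C, ∀ x : X, h x = 1 ∨ h x = -1)
    (k : ℕ) (hk : 1 ≤ k) (c : ℝ) (hc : 0 < c)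
    (f : Finset (X × ℤ) → Set (X → ℤ) → ℝ)
    (hrange : ∀ U : Finset (X × ℤ), U.card = k → ∀ V : Set (X → ℤ),
      0 ≤ f U V ∧ f U V ≤ c)
    (hmono : MonotoneScore C k f)
    (S : Finset (X × ℤ)) (z : X × ℤ) (hz : z ∉ S)
    (hreal : (VSpace C ↑(insert z S)).Nonempty) :
    pot C k f (insert z S) ≤ pot C k f S + c * (S.card.choose (k - 1)) := by
  obtain ⟨h, hhC, hh⟩ := hreal
  obtain ⟨k, rfl⟩ : ∃ j, k = j + 1 := ⟨k - 1, by omega⟩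
  unfold pot
  rw [Finset.powersetCard_succ_insert hz, Finset.sum_union]
  · apply add_le_add
    · apply Finset.sum_le_sum
      intro U hU
      obtain ⟨hUS, hUc⟩ := Finset.mem_powersetCard.1 hU
      have hzU : z ∉ U := fun hm => hz (hUS hm)
      have e : VSpace C ↑(insert z S \ U) = Restrict (VSpace C ↑(S \ U)) z.1 z.2 := by
        rw [Finset.insert_sdiff_of_notMem _ hzU]
        ext g
        simp only [VSpace, Restrict, Consistent, Finset.coe_insert, Set.mem_insert_iff,
          Set.mem_setOf_eq, forall_eq_or_imp]
        tauto
      rw [e]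
      have hV : h ∈ VSpace C ↑(S \ U) := by
        refine ⟨hhC, fun p hp => hh p ?_⟩
        have := (Finset.mem_sdiff.1 (Finset.mem_coe.1 hp)).1
        exact Finset.mem_coe.2 (Finset.mem_insert_of_mem this)
      have hcU : Consistent h (insert (z.1, z.2) (↑U : Set (X × ℤ))) := by
        intro p hp
        apply hh p
        rcases hp with rfl | hp
        · exact Finset.mem_coe.2 (Finset.mem_insert_self _ _)
        · exact Finset.mem_coe.2 (Finset.mem_insert_of_mem (hUS hp))
      exact hmono U hUc _ ⟨_, rfl⟩ ⟨h, hV, fun p hp => hcU p (Or.inr hp)⟩ z.1 z.2 ⟨h, hV, hcU⟩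
    · refine (Finset.sum_le_card_nsmul _ _ c ?_).trans ?_
      · intro U hU
        obtain ⟨T, hT, rfl⟩ := Finset.mem_image.1 hU
        obtain ⟨hTS, hTc⟩ := Finset.mem_powersetCard.1 hT
        refine (hrange _ ?_ _).2
        rw [Finset.card_insert_of_notMem (fun hm => hz (hTS hm)), hTc]
      · rw [nsmul_eq_mul, mul_comm]
        apply mul_le_mul_of_nonneg_left _ hc.le
        have := (Finset.card_image_le (s := S.powersetCard k) (f := insert z))
        rw [Finset.card_powersetCard] at this
        simpa using this
  · rw [Finset.disjoint_left]
    intro U hU hU'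
    obtain ⟨T, hT, rfl⟩ := Finset.mem_image.1 hU'
    exact hz ((Finset.mem_powersetCard.1 hU).1 (Finset.mem_insert_self _ _))
end

section
/- Fix an integer k ≥ 1, reals c > 0 and α > 0, and let f be a function mapping pairs (U; V), where U is a size-k set of labeled examples and V ⊆ 𝒞, into [0, c], satisfying the Monotonicity property. For such f, the leave-k-out potential of a finite labeled set S is ρ_f(S) := Σ_{U ⊆ S, |U| = k} f(U; 𝒱(S∖U)). Let ∅ = S_0 ⊂ S_1 ⊂ … ⊂ S_T be a nested sequence of sets of labeled examples with |S_t| = t for each t and S_T realizable. Then the number of indices t ∈ {1,…,T} with ρ_f(S_{t−1}) − ρ_f(S_t) ≥ α is at most (c/α)·C(T, k), which is at most c·T^k/(k!·α). -/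
/-! Basic notions for learning with a concept class `C ⊆ {+1,−1}^𝒳`.  Labeled examples are
pairs in `𝒳 × ℤ` (with labels `±1`). -/

variable {X : Type*}

theorem restrict_vspace_aux {X : Type*} (C : Set (X → ℤ)) (A : Set (X × ℤ)) (x : X) (y : ℤ) :
    Restrict (VSpace C A) x y = VSpace C (insert (x, y) A) := by
  ext h
  simp only [Restrict, VSpace, Consistent, Set.mem_ofPred_eq, Set.mem_insert_iff,
    forall_eq_or_imp]
  tauto

theorem pot_insert_aux {X : Type*} [DecidableEq X] (C : Set (X → ℤ))
    (k : ℕ) (c : ℝ)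
    (f : Finset (X × ℤ) → Set (X → ℤ) → ℝ)
    (hrange : ∀ U : Finset (X × ℤ), U.card = k + 1 → ∀ V : Set (X → ℤ),
      0 ≤ f U V ∧ f U V ≤ c)
    (hmono : MonotoneScore C (k + 1) f) (A : Finset (X × ℤ)) (p : X × ℤ) (hp : p ∉ A)
    (hreal : (VSpace C ↑(insert p A)).Nonempty) :
    pot C (k + 1) f (insert p A) ≤ pot C (k + 1) f A + c * (A.card.choose k : ℕ) := by
  unfold pot
  rw [Finset.powersetCard_succ_insert hp, Finset.sum_union]
  · apply add_le_add
    · apply Finset.sum_le_sum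
      intro U hU
      rw [Finset.mem_powersetCard] at hU
      obtain ⟨hUA, hUc⟩ := hU
      have hpU : p ∉ U := fun h => hp (hUA h)
      obtain ⟨h, hhC, hh⟩ := hreal
      have hm := hmono U hUc (VSpace C ↑(A \ U)) ⟨_, rfl⟩
        ⟨h, ⟨hhC, fun q hq => hh q (by
          have := Finset.sdiff_subset (Finset.mem_coe.1 hq); simp [this])⟩,
          fun q hq => hh q (by have := hUA (Finset.mem_coe.1 hq); simp [this])⟩ p.1 p.2
        ⟨h, ⟨hhC, fun q hq => hh q (by
          have := Finset.sdiff_subset (Finset.mem_coe.1 hq); simp [this])⟩,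
          fun q hq => hh q (by
            rcases hq with hq | hq
            · simp [hq]
            · have := hUA (Finset.mem_coe.1 hq); simp [this])⟩
      rw [restrict_vspace_aux] at hm
      rw [Finset.insert_sdiff_of_notMem _ hpU, Finset.coe_insert]
      exact hm
    · have hb : ∀ U ∈ (A.powersetCard k).image (insert p),
          f U (VSpace C ↑(insert p A \ U)) ≤ c := by
        intro U hU
        rw [Finset.mem_image] at hU
        obtain ⟨W, hW, rfl⟩ := hU
        rw [Finset.mem_powersetCard] at hW
        refine (hrange _ ?_ _).2
        rw [Finset.card_insert_of_notMem (fun h => hp (hW.1 h)), hW.2]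
      have h1 := Finset.sum_le_card_nsmul _ _ _ hb
      refine h1.trans ?_
      by_cases hc : 0 ≤ c
      · rw [nsmul_eq_mul, mul_comm]
        apply mul_le_mul_of_nonneg_left _ hc
        have := Finset.card_image_le (s := A.powersetCard k) (f := insert p)
        rw [Finset.card_powersetCard] at this
        exact_mod_cast this
      · rw [nsmul_eq_mul, mul_comm, Finset.card_image_of_injOn, Finset.card_powersetCard]
        intro U hU W hW h
        simp only [Finset.mem_coe,
          Finset.mem_powersetCard] at hU hW
        have e1 := Finset.erase_insert (fun h => hp (hU.1 h))
        have e2 := Finset.erase_insert (fun h => hp (hW.1 h))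
        rw [← e1, ← e2]
        exact congrArg (fun Z => Finset.erase Z p) h
  · rw [Finset.disjoint_left]
    intro U hU hU'
    rw [Finset.mem_image] at hU'
    obtain ⟨W, hW, rfl⟩ := hU'
    rw [Finset.mem_powersetCard] at hU
    exact hp (hU.1 (Finset.mem_insert_self _ _))

/-- Mistake bound for the leave-`k`-out potential: along a nested sequence
`∅ = S 0 ⊂ S 1 ⊂ … ⊂ S T` of labeled sets with `|S t| = t` and `S T` realizable, the number
of indices `t ∈ {1,…,T}` at which the potential drops by at least `α` is at most
`(c/α)·C(T,k)`, which in turn is at most `c·T^k/(k!·α)`. -/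
theorem stmt4 {X : Type*} [DecidableEq X] (C : Set (X → ℤ))
    (hC : ∀ h ∈ C, ∀ x : X, h x = 1 ∨ h x = -1)
    (k : ℕ) (hk : 1 ≤ k) (c α : ℝ) (hc : 0 < c) (hα : 0 < α)
    (f : Finset (X × ℤ) → Set (X → ℤ) → ℝ)
    (hrange : ∀ U : Finset (X × ℤ), U.card = k → ∀ V : Set (X → ℤ),
      0 ≤ f U V ∧ f U V ≤ c)
    (hmono : MonotoneScore C k f)
    (T : ℕ) (S : ℕ → Finset (X × ℤ))
    (hS0 : S 0 = ∅)
    (hnested : ∀ t < T, S t ⊆ S (t + 1))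
    (hcard : ∀ t ≤ T, (S t).card = t)
    (hrealT : (VSpace C ↑(S T)).Nonempty) :
    (({t : ℕ | 1 ≤ t ∧ t ≤ T ∧ α ≤ pot C k f (S (t - 1)) - pot C k f (S t)}.ncard : ℝ)
        ≤ c / α * (T.choose k)) ∧
    (c / α * (T.choose k) : ℝ) ≤ c * (T : ℝ) ^ k / (Nat.factorial k * α) := by
  classical
  constructor
  · obtain ⟨j, rfl⟩ : ∃ j, k = j + 1 := ⟨k - 1, by omega⟩
    have hsub : ∀ d t, t + d = T → S t ⊆ S T := by
      intro d
      induction d with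
      | zero => rintro t rfl; exact subset_rfl
      | succ d ih =>
        intro t ht
        exact (hnested t (by omega)).trans (ih (t + 1) (by omega))
    let G : ℕ → Finset ℕ := fun n => (Finset.range n).filter
      (fun i => α ≤ pot C (j + 1) f (S i) - pot C (j + 1) f (S (i + 1)))
    have key : ∀ n ≤ T, pot C (j + 1) f (S n) + α * ((G n).card : ℝ)
        ≤ c * (n.choose (j + 1) : ℕ) := by
      intro n
      induction n with
      | zero =>
        intro _
        have he : (∅ : Finset (X × ℤ)).powersetCard (j + 1) = ∅ :=
          Finset.powersetCard_eq_empty.2 (by simp)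
        simp [G, hS0, pot, he]
      | succ n ih =>
        intro hn
        have ih := ih (by omega)
        have hch : (((n + 1).choose (j + 1) : ℕ) : ℝ) = (n.choose j : ℕ) + (n.choose (j + 1) : ℕ) := by
          rw [Nat.choose_succ_succ]; push_cast; rfl
        rw [hch, mul_add]
        by_cases hg : α ≤ pot C (j + 1) f (S n) - pot C (j + 1) f (S (n + 1))
        · have : (G (n + 1)).card = (G n).card + 1 := by
            simp only [G]
            rw [Finset.range_add_one, Finset.filter_insert, if_pos hg,
              Finset.card_insert_of_notMem (by simp)]
          rw [this]
          push_cast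
          have : 0 ≤ c * ((n.choose j : ℕ) : ℝ) := by positivity
          linarith
        · have : G (n + 1) = G n := by
            simp only [G]
            rw [Finset.range_add_one, Finset.filter_insert, if_neg hg]
          rw [this]
          have hs := hnested n (by omega)
          obtain ⟨p, hp⟩ : ∃ p, S (n + 1) \ S n = {p} := by
            rw [← Finset.card_eq_one, Finset.card_sdiff_of_subset hs, hcard _ hn,
              hcard n (by omega)]
            omega
          have hpn : p ∉ S n := by
            have : p ∈ S (n + 1) \ S n := by rw [hp]; simp
            exact (Finset.mem_sdiff.1 this).2
          have hins : S (n + 1) = insert p (S n) := by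
            rw [← Finset.sdiff_union_of_subset hs, hp]; rfl
          have hr : (VSpace C ↑(insert p (S n))).Nonempty := by
            obtain ⟨h, hhC, hh⟩ := hrealT
            refine ⟨h, hhC, fun q hq => hh q ?_⟩
            rw [← hins] at hq
            exact hsub (T - (n + 1)) (n + 1) (by omega) hq
          have := pot_insert_aux C j c f hrange hmono (S n) p hpn hr
          rw [hins]
          rw [hcard n (by omega)] at this
          linarith
    have hset : {t : ℕ | 1 ≤ t ∧ t ≤ T ∧
        α ≤ pot C (j + 1) f (S (t - 1)) - pot C (j + 1) f (S t)}
        = ↑((G T).image (fun i => i + 1)) := by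
      ext t
      simp only [G, Set.mem_ofPred_eq, Finset.coe_image, Set.mem_image, Finset.mem_coe,
        Finset.mem_filter, Finset.mem_range]
      constructor
      · rintro ⟨h1, h2, h3⟩
        refine ⟨t - 1, ⟨by omega, ?_⟩, by omega⟩
        rwa [Nat.sub_add_cancel h1]
      · rintro ⟨i, ⟨h1, h2⟩, rfl⟩
        exact ⟨by omega, by omega, by simpa using h2⟩
    rw [hset, Set.ncard_coe_finset, Finset.card_image_of_injective _ (add_left_injective 1)]
    have h1 := key T le_rfl
    have h0 : 0 ≤ pot C (j + 1) f (S T) := Finset.sum_nonneg fun U hU =>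
      (hrange U (Finset.mem_powersetCard.1 hU).2 _).1
    rw [div_mul_eq_mul_div, le_div_iff₀ hα]
    linarith
  · have h := Nat.choose_le_pow_div (α := ℝ) k T
    calc c / α * (T.choose k : ℝ) ≤ c / α * ((T : ℝ) ^ k / (Nat.factorial k : ℝ)) := by gcongr
      _ = _ := by field_simp
end

section
/- Fix integers m ≥ k+1 ≥ 2, reals c > 0 and α ≥ 1, an integer T ≥ 1, and let f be an (m,c,k)-good function for (𝒞,𝒳). Let h ∈ 𝒞 and let S be a finite set of labeled examples labeled by h with |S| ≤ T. Call (x,y) ∈ S attackable if there exists a set A of labeled examples labeled by h with A ⊇ S∖{(x,y)} and |A| ≤ T such that both (x,+1) and (x,−1) are realizable in 𝒱(A) and ρ_f(A) − ρ_f(A ∪ {(x,−y)}) < α. Then the number of attackable elements of S is at most e·m·(α + c·C(T, k−1))^{1/k}, where C(n,r) is the binomial coefficient and e is Euler's number. -/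
/-! Basic notions for learning with a concept class `C ⊆ {+1,−1}^𝒳`.  Labeled examples are
pairs in `𝒳 × ℤ` (with labels `±1`). -/

variable {X : Type*}

theorem aux_weight {ι : Type*} [DecidableEq ι] (B Z : Finset ι) (hZ : Z ⊆ B) (q : ℝ) :
    ∑ R ∈ B.powerset, (q ^ R.card * (1 - q) ^ (B \ R).card) * (if Z ⊆ R then 1 else 0)
      = q ^ Z.card := by
  have h := Finset.prod_add (fun _ : ι => q) (fun i => if i ∈ Z then 0 else 1 - q) B
  have h1 : ∏ i ∈ B, (q + (if i ∈ Z then 0 else 1 - q)) = q ^ Z.card := by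
    have : ∀ i ∈ B, (q + (if i ∈ Z then 0 else 1 - q)) = if i ∈ Z then q else 1 := by
      intro i _; split_ifs <;> ring
    rw [Finset.prod_congr rfl this, Finset.prod_ite_mem, Finset.inter_eq_right.2 hZ]
    simp
  rw [← h1, h]
  refine Finset.sum_congr rfl fun R hR => ?_
  rw [Finset.prod_const, mul_assoc]
  congr 1
  split_ifs with hZR
  · rw [mul_one, Finset.prod_congr rfl (g := fun _ => 1 - q), Finset.prod_const]
    intro i hi
    rw [if_neg]
    intro hiZ
    exact (Finset.mem_sdiff.1 hi).2 (hZR hiZ)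
  · rw [mul_zero]
    obtain ⟨z, hz, hzR⟩ := Finset.not_subset.1 hZR
    symm
    exact Finset.prod_eq_zero (Finset.mem_sdiff.2 ⟨hZ hz, hzR⟩) (by simp [hz])

theorem aux_R {ι : Type*} [DecidableEq ι] (B : Finset ι) (E : ι → Finset (Finset ι)) (m : ℕ)
    (hM : ∀ M ⊆ B, M.card = m → ∃ p ∈ M, ∃ U ∈ E p, U ⊆ M) (R : Finset ι) (hR : R ⊆ B) :
    (∑ p ∈ B, (if {p} ⊆ R then (1 : ℝ) else 0)) ≤
      m + ∑ p ∈ B, ∑ U ∈ E p, (if insert p U ⊆ R then (1 : ℝ) else 0) := by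
  classical
  set Q : ι → Prop := fun p => ∃ U ∈ E p, U ⊆ R
  have hI : (R.filter (fun p => ¬ Q p)).card ≤ m := by
    by_contra hcon
    push Not at hcon
    obtain ⟨M, hMs, hMc⟩ := Finset.exists_subset_card_eq hcon.le
    have hMR : M ⊆ R := hMs.trans (Finset.filter_subset _ _)
    obtain ⟨p, hp, U, hU, hUM⟩ := hM M (hMR.trans hR) hMc
    exact (Finset.mem_filter.1 (hMs hp)).2 ⟨U, hU, hUM.trans hMR⟩
  have hcard : (∑ p ∈ B, (if {p} ⊆ R then (1 : ℝ) else 0)) = R.card := by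
    simp [Finset.sum_ite_mem, Finset.inter_eq_right.2 hR]
  have hsplit := Finset.card_filter_add_card_filter_not (s := R) Q
  have h2 : ((R.filter Q).card : ℝ) ≤
      ∑ p ∈ B, ∑ U ∈ E p, (if insert p U ⊆ R then (1 : ℝ) else 0) := by
    calc ((R.filter Q).card : ℝ) = ∑ p ∈ R.filter Q, (1 : ℝ) := by simp
      _ ≤ ∑ p ∈ R.filter Q, ∑ U ∈ E p, (if insert p U ⊆ R then (1 : ℝ) else 0) := by
        refine Finset.sum_le_sum fun p hp => ?_
        obtain ⟨hpR, U, hU, hUR⟩ := Finset.mem_filter.1 hp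
        have := Finset.single_le_sum
          (f := fun U => if insert p U ⊆ R then (1 : ℝ) else 0) (s := E p)
          (fun i _ => by split_ifs <;> norm_num) hU
        simpa [Finset.insert_subset_iff, hpR, hUR] using this
      _ ≤ _ := by
        refine Finset.sum_le_sum_of_subset_of_nonneg ((Finset.filter_subset _ _).trans hR) ?_
        intro i _ _
        exact Finset.sum_nonneg fun U _ => by split_ifs <;> norm_num
  rw [hcard]
  have h3 : (R.card : ℝ) = (R.filter Q).card + (R.filter (fun p => ¬ Q p)).card := by
    exact_mod_cast hsplit.symm
  have h4 : ((R.filter (fun p => ¬ Q p)).card : ℝ) ≤ m := by exact_mod_cast hI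
  linarith

theorem aux_deletion {ι : Type*} [DecidableEq ι] (B : Finset ι) (E : ι → Finset (Finset ι))
    (m k : ℕ)
    (hE : ∀ p ∈ B, ∀ U ∈ E p, U ⊆ B ∧ U.card = k ∧ p ∉ U)
    (hM : ∀ M ⊆ B, M.card = m → ∃ p ∈ M, ∃ U ∈ E p, U ⊆ M)
    (D : ℝ) (hD : ∀ p ∈ B, ((E p).card : ℝ) ≤ D) (q : ℝ) (hq0 : 0 ≤ q) (hq1 : q ≤ 1) :
    B.card * q ≤ m + B.card * D * q ^ (k + 1) := by
  set w : Finset ι → ℝ := fun R => q ^ R.card * (1 - q) ^ (B \ R).card with hw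
  have hw0 : ∀ R, 0 ≤ w R := fun R =>
    mul_nonneg (pow_nonneg hq0 _) (pow_nonneg (by linarith) _)
  have hmain : ∑ R ∈ B.powerset, w R * (∑ p ∈ B, (if {p} ⊆ R then (1 : ℝ) else 0)) ≤
      ∑ R ∈ B.powerset, w R *
        (m + ∑ p ∈ B, ∑ U ∈ E p, (if insert p U ⊆ R then (1 : ℝ) else 0)) :=
    Finset.sum_le_sum fun R hR => mul_le_mul_of_nonneg_left
      (aux_R B E m hM R (Finset.mem_powerset.1 hR)) (hw0 R)
  have hL : ∑ R ∈ B.powerset, w R * (∑ p ∈ B, (if {p} ⊆ R then (1 : ℝ) else 0))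
      = B.card * q := by
    simp_rw [Finset.mul_sum]
    rw [Finset.sum_comm]
    rw [Finset.sum_congr rfl (g := fun _ => q)]
    · simp
    · intro p hp
      have := aux_weight B {p} (Finset.singleton_subset_iff.2 hp) q
      simpa only [Finset.card_singleton, pow_one] using this
  have h1 : ∑ R ∈ B.powerset, w R = 1 := by
    have := aux_weight B ∅ (Finset.empty_subset _) q
    simpa using this
  have hR : ∑ R ∈ B.powerset, w R *
        (m + ∑ p ∈ B, ∑ U ∈ E p, (if insert p U ⊆ R then (1 : ℝ) else 0))
      = m + ∑ p ∈ B, (E p).card * q ^ (k + 1) := by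
    simp_rw [mul_add]
    rw [Finset.sum_add_distrib, ← Finset.sum_mul, h1, one_mul]
    congr 1
    simp_rw [Finset.mul_sum]
    rw [Finset.sum_comm]
    refine Finset.sum_congr rfl fun p hp => ?_
    rw [Finset.sum_comm]
    rw [Finset.sum_congr rfl (g := fun _ => q ^ (k + 1))]
    · simp
    · intro U hU
      obtain ⟨a, b, d⟩ := hE p hp U hU
      have := aux_weight B (insert p U) (Finset.insert_subset hp a) q
      rw [Finset.card_insert_of_notMem d, b] at this
      exact this
  rw [hL, hR] at hmain
  have : ∑ p ∈ B, ((E p).card : ℝ) * q ^ (k + 1) ≤ ∑ p ∈ B, D * q ^ (k + 1) :=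
    Finset.sum_le_sum fun p hp => mul_le_mul_of_nonneg_right (hD p hp) (pow_nonneg hq0 _)
  rw [Finset.sum_const, nsmul_eq_mul] at this
  linarith

theorem aux_big {ι : Type*} [DecidableEq ι] (B : Finset ι) (E : ι → Finset (Finset ι))
    (m k : ℕ) (hk : 2 ≤ k)
    (hE : ∀ p ∈ B, ∀ U ∈ E p, U ⊆ B ∧ U.card = k ∧ p ∉ U)
    (hM : ∀ M ⊆ B, M.card = m → ∃ p ∈ M, ∃ U ∈ E p, U ⊆ M)
    (D : ℝ) (hD1 : 1 ≤ D) (hD : ∀ p ∈ B, ((E p).card : ℝ) ≤ D) :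
    (B.card : ℝ) ≤ Real.exp 1 * m * D ^ ((1 : ℝ) / k) := by
  set r := D ^ ((1 : ℝ) / k) with hr
  have hr1 : 1 ≤ r := Real.one_le_rpow hD1 (by positivity)
  have hrk : r ^ k = D := by
    rw [hr, one_div, Real.rpow_inv_natCast_pow (by linarith) (by omega)]
  have hr0 : 0 < r := by linarith
  have h := aux_deletion B E m k hE hM D hD (3 / 5 / r) (by positivity)
    (by rw [div_le_one hr0]; linarith)
  have h2 : D * (3 / 5 / r) ^ (k + 1) ≤ 9 / 25 * (3 / 5 / r) := by
    rw [pow_succ, div_pow, hrk, ← mul_assoc]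
    apply mul_le_mul_of_nonneg_right _ (by positivity)
    rw [mul_div_cancel₀ _ (by linarith)]
    calc ((3 : ℝ) / 5) ^ k ≤ (3 / 5) ^ 2 := pow_le_pow_of_le_one (by norm_num) (by norm_num) hk
      _ = _ := by norm_num
  have h3 : (B.card : ℝ) * (3 / 5 / r) * (16 / 25) ≤ m := by
    have := mul_le_mul_of_nonneg_left h2 (Nat.cast_nonneg (α := ℝ) B.card)
    nlinarith
  have h4 : (B.card : ℝ) ≤ 125 / 48 * (m * r) := by
    have : (B.card : ℝ) * (3 / 5 / r) * (16 / 25) = B.card * (48 / 125) / r := by ring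
    rw [this, div_le_iff₀ hr0] at h3
    linarith
  have he := Real.exp_one_gt_d9
  have : 0 ≤ (m : ℝ) * r := by positivity
  nlinarith

theorem aux_greedy {ι : Type*} [DecidableEq ι] (N : ι → Finset ι) (D : ℝ)
    (hN : ∀ p, p ∉ N p) (n : ℕ) : ∀ (W : Finset ι), W.card ≤ n →
    (∀ p ∈ W, ((N p).card : ℝ) ≤ D) →
    ∃ I ⊆ W, (∀ p ∈ I, ∀ u ∈ I, u ∉ N p) ∧ (W.card : ℝ) ≤ (2 * D + 1) * I.card := by
  induction n with
  | zero =>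
    intro W hW _
    have : W = ∅ := Finset.card_eq_zero.1 (by omega)
    subst this
    exact ⟨∅, by simp⟩
  | succ n ih =>
    intro W hW hD
    rcases W.eq_empty_or_nonempty with rfl | hne
    · exact ⟨∅, by simp⟩
    have hsum : ∑ v ∈ W, (((W.filter (fun u => u ∈ N v)).card : ℝ)
        + (W.filter (fun u => v ∈ N u)).card) ≤ ∑ v ∈ W, 2 * D := by
      have e1 : ∑ v ∈ W, ((W.filter (fun u => v ∈ N u)).card : ℝ)
          = ∑ v ∈ W, ((W.filter (fun u => u ∈ N v)).card : ℝ) := by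
        simp_rw [Finset.card_filter]
        push_cast
        rw [Finset.sum_comm]
      rw [Finset.sum_add_distrib, e1, ← two_mul, ← Finset.mul_sum]
      refine mul_le_mul_of_nonneg_left (Finset.sum_le_sum fun v hv => ?_) (by norm_num)
      refine le_trans ?_ (hD v hv)
      exact_mod_cast Finset.card_le_card fun u hu => (Finset.mem_filter.1 hu).2
    obtain ⟨v, hv, hvD⟩ := Finset.exists_le_of_sum_le hne hsum
    set K := insert v (W.filter (fun u => u ∈ N v) ∪ W.filter (fun u => v ∈ N u)) with hK
    have hKW : K ⊆ W := by
      rw [hK]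
      exact Finset.insert_subset hv (Finset.union_subset (Finset.filter_subset _ _)
        (Finset.filter_subset _ _))
    have hKc : (K.card : ℝ) ≤ 2 * D + 1 := by
      have a := Finset.card_insert_le v
        (W.filter (fun u => u ∈ N v) ∪ W.filter (fun u => v ∈ N u))
      have b := Finset.card_union_le (W.filter (fun u => u ∈ N v))
        (W.filter (fun u => v ∈ N u))
      have : (K.card : ℝ) ≤ ((W.filter (fun u => u ∈ N v)).card : ℝ)
        + (W.filter (fun u => v ∈ N u)).card + 1 := by
        exact_mod_cast a.trans (Nat.add_le_add_right b 1)
      linarith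
    have hvK : v ∈ K := Finset.mem_insert_self _ _
    have hlt : (W \ K).card < W.card := Finset.card_lt_card
      (Finset.sdiff_ssubset hKW ⟨v, hvK⟩)
    obtain ⟨I, hI, hind, hc⟩ := ih (W \ K) (by omega)
      (fun p hp => hD p (Finset.mem_sdiff.1 hp).1)
    have hvI : v ∉ I := fun h => (Finset.mem_sdiff.1 (hI h)).2 hvK
    refine ⟨insert v I, Finset.insert_subset hv (hI.trans Finset.sdiff_subset), ?_, ?_⟩
    · have hx : ∀ u ∈ I, u ∉ N v ∧ v ∉ N u := by
        intro u hu
        have := Finset.mem_sdiff.1 (hI hu)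
        simp only [hK, Finset.mem_insert, Finset.mem_union, Finset.mem_filter] at this
        tauto
      intro p hp u hu
      rcases Finset.mem_insert.1 hp with rfl | hp1
      · rcases Finset.mem_insert.1 hu with rfl | hu
        · exact hN _
        · exact (hx u hu).1
      · rcases Finset.mem_insert.1 hu with rfl | hu
        · exact (hx p hp1).2
        · exact hind p hp1 u hu
    · rw [Finset.card_insert_of_notMem hvI]
      have : ((W \ K).card : ℝ) + K.card = W.card := by
        exact_mod_cast Finset.card_sdiff_add_card_eq_card hKW
      push_cast
      linarith

theorem aux_one {ι : Type*} [DecidableEq ι] (B : Finset ι) (E : ι → Finset (Finset ι))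
    (m : ℕ)
    (hE : ∀ p ∈ B, ∀ U ∈ E p, U ⊆ B ∧ U.card = 1 ∧ p ∉ U)
    (hM : ∀ M ⊆ B, M.card = m → ∃ p ∈ M, ∃ U ∈ E p, U ⊆ M)
    (D : ℝ) (hD1 : 2 ≤ D) (hD : ∀ p ∈ B, ((E p).card : ℝ) ≤ D) :
    (B.card : ℝ) ≤ Real.exp 1 * m * D := by
  obtain ⟨I, hI, hind, hc⟩ := aux_greedy
    (fun p => B.filter (fun u => u ≠ p ∧ ({u} : Finset ι) ∈ E p)) D (by simp) B.card B le_rfl (by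
      intro p hp
      refine le_trans ?_ (hD p hp)
      exact_mod_cast Finset.card_le_card_of_injOn (fun u => ({u} : Finset ι))
        (fun u hu => by
          have hu2 := Finset.mem_filter.1 (Finset.mem_coe.1 hu)
          exact hu2.2.2) (fun a _ b _ h => by simpa using h))
  have hIm : I.card ≤ m := by
    by_contra hcon
    push Not at hcon
    obtain ⟨M, hMs, hMc⟩ := Finset.exists_subset_card_eq hcon.le
    obtain ⟨p, hp, U, hU, hUM⟩ := hM M (hMs.trans hI) hMc
    have hpB := hI (hMs hp)
    obtain ⟨a, b, d⟩ := hE p hpB U hU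
    obtain ⟨u, rfl⟩ := Finset.card_eq_one.1 b
    have hu : u ∈ M := hUM (Finset.mem_singleton_self _)
    refine hind p (hMs hp) u (hMs hu) (Finset.mem_filter.2 ⟨hI (hMs hu), ?_, hU⟩)
    rintro rfl
    simp at d
  have he := Real.exp_one_gt_d9
  have h1 : (I.card : ℝ) ≤ m := by exact_mod_cast hIm
  have h2 : (2 * D + 1) * (I.card : ℝ) ≤ (2 * D + 1) * m :=
    mul_le_mul_of_nonneg_left h1 (by linarith)
  have h3 : (2 * D + 1) * (m : ℝ) ≤ Real.exp 1 * D * m :=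
    mul_le_mul_of_nonneg_right (by nlinarith) (Nat.cast_nonneg m)
  linarith

theorem aux_restrict {X : Type*} [DecidableEq X] (C : Set (X → ℤ)) (A U : Finset (X × ℤ))
    (x : X) (y : ℤ) (hq : (x, y) ∉ U) :
    VSpace C ↑(insert (x, y) A \ U) = Restrict (VSpace C ↑(A \ U)) x y := by
  rw [Finset.insert_sdiff_of_notMem _ hq]
  ext g
  simp only [VSpace, Restrict, Consistent, Set.mem_setOf_eq, Finset.coe_insert,
    Set.mem_insert_iff, forall_eq_or_imp]
  tauto

/-- The witnessing property relative to a base set `B`. -/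
def GoodPair [DecidableEq X] (C : Set (X → ℤ)) (f : Finset (X × ℤ) → Set (X → ℤ) → ℝ)
    (h : X → ℤ) (B U : Finset (X × ℤ)) (p : X × ℤ) : Prop :=
  ∀ A : Set (X × ℤ), Consistent h A → ↑(B \ insert p U) ⊆ A →
        (1 ≤ f U (VSpace C A) - f U (Restrict (VSpace C A) p.1 (-p.2)) ∨
          ¬ ∃ h' ∈ Restrict (VSpace C A) p.1 (-p.2), Consistent h' ↑U)

theorem aux_drop {X : Type*} [DecidableEq X] (C : Set (X → ℤ))
    (m k : ℕ) (hk : 1 ≤ k) (c α : ℝ) (hc : 0 < c) (T : ℕ)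
    (f : Finset (X × ℤ) → Set (X → ℤ) → ℝ)
    (hf : IsGood C m c k f) (h : X → ℤ)
    (B A : Finset (X × ℤ)) (p : X × ℤ) (hp : h p.1 = p.2) (hp2 : p.2 ≠ -p.2)
    (hA : Consistent h ↑A) (hBA : B.erase p ⊆ A) (hAT : A.card ≤ T)
    (hreal : RealizableIn (VSpace C ↑A) p.1 (-p.2))
    (hdrop : pot C k f A - pot C k f (insert (p.1, -p.2) A) < α)
    (E : Finset (Finset (X × ℤ)))
    (hE : ∀ U ∈ E, U ⊆ B ∧ U.card = k ∧ p ∉ U ∧ GoodPair C f h B U p) :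
    (E.card : ℝ) ≤ α + c * T.choose (k - 1) ∧ (E.Nonempty → 1 ≤ c) := by
  obtain ⟨h', ⟨⟨h'C, h'A⟩, h'q⟩⟩ := hreal
  set q : X × ℤ := (p.1, -p.2) with hqdef
  have hqA : q ∉ A := by
    intro hq
    have := hA q hq
    exact hp2 (hp.symm.trans this)
  have hEA : ∀ U ∈ E, U ∈ A.powersetCard k := by
    intro U hU
    obtain ⟨a, b, d, _⟩ := hE U hU
    refine Finset.mem_powersetCard.2 ⟨fun u hu => hBA (Finset.mem_erase.2 ⟨?_, a hu⟩), b⟩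
    rintro rfl
    exact d hu
  have h'sub : ∀ U, h' ∈ VSpace C ↑(A \ U) := fun U =>
    ⟨h'C, fun z hz => h'A z (Finset.mem_sdiff.1 hz).1⟩
  have hone : ∀ U ∈ E, 1 ≤ f U (VSpace C ↑(A \ U)) -
      f U (Restrict (VSpace C ↑(A \ U)) p.1 (-p.2)) := by
    intro U hU
    obtain ⟨a, b, d, g⟩ := hE U hU
    rcases g ↑(A \ U) (fun z hz => hA z (Finset.mem_sdiff.1 hz).1) (by
      intro z hz
      have hz' : z ∈ B \ insert p U := hz
      simp only [Finset.mem_sdiff, Finset.mem_insert, not_or] at hz'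
      exact Finset.mem_coe.2 (Finset.mem_sdiff.2
        ⟨hBA (Finset.mem_erase.2 ⟨hz'.2.1, hz'.1⟩), hz'.2.2⟩)) with g | g
    · exact g
    · exact absurd ⟨h', ⟨h'sub U, h'q⟩, fun z hz =>
        h'A z ((Finset.mem_powersetCard.1 (hEA U hU)).1 hz)⟩ g
  have hmono : ∀ U ∈ A.powersetCard k, 0 ≤ f U (VSpace C ↑(A \ U)) -
      f U (Restrict (VSpace C ↑(A \ U)) p.1 (-p.2)) := by
    intro U hU
    obtain ⟨a, b⟩ := Finset.mem_powersetCard.1 hU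
    refine sub_nonneg.2 (hf.2.1 U b _ ⟨_, rfl⟩ ⟨h', h'sub U, fun z hz => h'A z (a hz)⟩ _ _
      ⟨h', h'sub U, ?_⟩)
    intro z hz
    rcases hz with rfl | hz
    · exact h'q
    · exact h'A z (a hz)
  refine ⟨?_, ?_⟩
  · obtain ⟨j, rfl⟩ : ∃ j, k = j + 1 := ⟨k - 1, by omega⟩
    have hpot : pot C (j + 1) f (insert q A) ≤
        (∑ U ∈ A.powersetCard (j + 1), f U (Restrict (VSpace C ↑(A \ U)) p.1 (-p.2)))
          + c * T.choose j := by
      unfold pot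
      rw [Finset.powersetCard_succ_insert hqA, Finset.sum_union]
      · refine add_le_add (le_of_eq (Finset.sum_congr rfl fun U hU => ?_)) ?_
        · rw [hqdef, aux_restrict]
          exact fun hq => hqA ((Finset.mem_powersetCard.1 hU).1 hq)
        · have hb : ∀ U ∈ (A.powersetCard j).image (insert q),
              f U (VSpace C ↑(insert q A \ U)) ≤ c := by
            intro U hU
            obtain ⟨U', hU', rfl⟩ := Finset.mem_image.1 hU
            obtain ⟨a, b⟩ := Finset.mem_powersetCard.1 hU'
            exact (hf.1 _ (by rw [Finset.card_insert_of_notMem (fun hq => hqA (a hq)), b]) _).2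
          refine (Finset.sum_le_card_nsmul _ _ _ hb).trans ?_
          rw [nsmul_eq_mul, mul_comm]
          refine mul_le_mul_of_nonneg_left ?_ hc.le
          have := (Finset.card_image_le (s := A.powersetCard j) (f := insert q))
          rw [Finset.card_powersetCard] at this
          exact_mod_cast this.trans (Nat.choose_le_choose j hAT)
      · rw [Finset.disjoint_left]
        intro U hU hU2
        obtain ⟨U', hU', rfl⟩ := Finset.mem_image.1 hU2
        exact hqA ((Finset.mem_powersetCard.1 hU).1 (Finset.mem_insert_self _ _))
    have h1 : (E.card : ℝ) ≤ ∑ U ∈ A.powersetCard (j + 1), (f U (VSpace C ↑(A \ U)) -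
        f U (Restrict (VSpace C ↑(A \ U)) p.1 (-p.2))) := by
      calc (E.card : ℝ) = ∑ U ∈ E, (1 : ℝ) := by simp
        _ ≤ ∑ U ∈ E, (f U (VSpace C ↑(A \ U)) -
            f U (Restrict (VSpace C ↑(A \ U)) p.1 (-p.2))) := Finset.sum_le_sum hone
        _ ≤ _ := Finset.sum_le_sum_of_subset_of_nonneg hEA (fun U hU _ => hmono U hU)
    rw [Finset.sum_sub_distrib] at h1
    have h2 : pot C (j + 1) f A = ∑ U ∈ A.powersetCard (j + 1), f U (VSpace C ↑(A \ U)) := rfl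
    simp only [Nat.add_sub_cancel]
    linarith
  · rintro ⟨U, hU⟩
    have a := hone U hU
    have b := (hf.1 U (hE U hU).2.1 (VSpace C ↑(A \ U))).2
    have d := (hf.1 U (hE U hU).2.1 (Restrict (VSpace C ↑(A \ U)) p.1 (-p.2))).1
    linarith

/-- Bound on the number of attackable samples: if `f` is `(m,c,k)`-good, `h ∈ C`, and `S`
is a set of labeled examples labeled by `h` with `|S| ≤ T`, then the number of
`(x,y) ∈ S` that are attackable — i.e. for which some truthfully labeled extension
`A ⊇ S ∖ {(x,y)}` with `|A| ≤ T` has both labels of `x` realizable in `𝒱(A)` and a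
potential drop `ρ_f(A) − ρ_f(A ∪ {(x,−y)}) < α` — is at most
`e · m · (α + c · C(T, k−1))^{1/k}`. -/
theorem stmt5 {X : Type*} [DecidableEq X] (C : Set (X → ℤ))
    (hC : ∀ h ∈ C, ∀ x : X, h x = 1 ∨ h x = -1)
    (m k : ℕ) (hk : 1 ≤ k) (hm : k + 1 ≤ m)
    (c α : ℝ) (hc : 0 < c) (hα : 1 ≤ α)
    (T : ℕ) (hT : 1 ≤ T)
    (f : Finset (X × ℤ) → Set (X → ℤ) → ℝ)
    (hf : IsGood C m c k f)
    (h : X → ℤ) (hh : h ∈ C)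
    (S : Finset (X × ℤ)) (hcons : Consistent h ↑S) (hScard : S.card ≤ T) :
    (({p : X × ℤ | p ∈ S ∧ ∃ A : Finset (X × ℤ), Consistent h ↑A ∧
        ↑(S.erase p) ⊆ (↑A : Set (X × ℤ)) ∧ A.card ≤ T ∧
        RealizableIn (VSpace C ↑A) p.1 1 ∧ RealizableIn (VSpace C ↑A) p.1 (-1) ∧
        pot C k f A - pot C k f (insert (p.1, -p.2) A) < α}.ncard : ℝ)) ≤
      Real.exp 1 * m * (α + c * (T.choose (k - 1))) ^ ((1 : ℝ) / k) := by
  classical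
  set P : X × ℤ → Prop := fun p => ∃ A : Finset (X × ℤ), Consistent h ↑A ∧
        ↑(S.erase p) ⊆ (↑A : Set (X × ℤ)) ∧ A.card ≤ T ∧
        RealizableIn (VSpace C ↑A) p.1 1 ∧ RealizableIn (VSpace C ↑A) p.1 (-1) ∧
        pot C k f A - pot C k f (insert (p.1, -p.2) A) < α with hP
  set B := S.filter P with hB
  have hset : {p : X × ℤ | p ∈ S ∧ P p} = ↑B := by
    ext p; simp [hB]
  change (({p : X × ℤ | p ∈ S ∧ P p}.ncard : ℝ)) ≤ _
  rw [hset, Set.ncard_coe_finset]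
  set D := α + c * (T.choose (k - 1)) with hDdef
  have hD1 : 1 ≤ D := by
    have : 0 ≤ c * (T.choose (k - 1) : ℝ) := by positivity
    linarith
  have hr1 : 1 ≤ D ^ ((1 : ℝ) / k) := Real.one_le_rpow hD1 (by positivity)
  let E : X × ℤ → Finset (Finset (X × ℤ)) := fun p =>
    (B.powersetCard k).filter (fun U => p ∉ U ∧ GoodPair C f h B U p)
  have hE : ∀ p, ∀ U ∈ E p, U ⊆ B ∧ U.card = k ∧ p ∉ U ∧ GoodPair C f h B U p := by
    intro p U hU
    obtain ⟨a, b⟩ := Finset.mem_filter.1 hU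
    obtain ⟨a1, a2⟩ := Finset.mem_powersetCard.1 a
    exact ⟨a1, a2, b⟩
  have hE' : ∀ p ∈ B, ∀ U ∈ E p, U ⊆ B ∧ U.card = k ∧ p ∉ U := fun p _ U hU =>
    ⟨(hE p U hU).1, (hE p U hU).2.1, (hE p U hU).2.2.1⟩
  have hBS : B ⊆ S := Finset.filter_subset _ _
  have hM : ∀ M ⊆ B, M.card = m → ∃ p ∈ M, ∃ U ∈ E p, U ⊆ M := by
    intro M hMB hMc
    obtain ⟨U, hUM, hUc, p, hpM, hpU, g⟩ :=
      hf.2.2 h hh M hMc (fun z hz => hcons z (hBS (hMB hz)))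
    refine ⟨p, hpM, U, Finset.mem_filter.2 ⟨Finset.mem_powersetCard.2
      ⟨hUM.trans hMB, hUc⟩, hpU, ?_⟩, hUM⟩
    intro A hA hsub
    refine g A hA (subset_trans ?_ hsub)
    exact_mod_cast Finset.sdiff_subset_sdiff hMB (Finset.Subset.refl _)
  have hdrop : ∀ p ∈ B, ((E p).card : ℝ) ≤ D ∧ ((E p).Nonempty → 1 ≤ c) := by
    intro p hpB
    obtain ⟨hpS, A, hA, hSA, hAT, hr, hr', hd⟩ := Finset.mem_filter.1 hpB
    have hp : h p.1 = p.2 := hcons p hpS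
    have hpm : p.2 = 1 ∨ p.2 = -1 := hp ▸ hC h hh p.1
    refine aux_drop C m k hk c α hc T f hf h B A p hp (by omega) hA ?_ hAT ?_ hd (E p) (hE p)
    · have hSA' : S.erase p ⊆ A := by exact_mod_cast hSA
      exact (Finset.erase_subset_erase p hBS).trans hSA'
    · rcases hpm with e | e <;> rw [e]
      · exact hr'
      · simpa using hr
  rcases Nat.lt_or_ge k 2 with hk2 | hk2
  · obtain rfl : k = 1 := by omega
    rcases Nat.lt_or_ge B.card m with hn | hn
    · have he := Real.exp_one_gt_d9
      have h1 : (B.card : ℝ) ≤ m := by exact_mod_cast hn.le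
      have h2 : (m : ℝ) ≤ Real.exp 1 * m := by
        have : (0 : ℝ) ≤ m := Nat.cast_nonneg m
        nlinarith
      have h3 : Real.exp 1 * (m : ℝ) ≤ Real.exp 1 * m * D ^ ((1 : ℝ) / (1 : ℕ)) :=
        le_mul_of_one_le_right (by positivity) hr1
      linarith
    · obtain ⟨M, hMs, hMc⟩ := Finset.exists_subset_card_eq hn
      obtain ⟨p, hp, U, hU, _⟩ := hM M hMs hMc
      have hc1 := (hdrop p (hMs hp)).2 ⟨U, hU⟩
      have := aux_one B E m hE' hM D (by rw [hDdef]; simp; linarith)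
        (fun p hp => (hdrop p hp).1)
      simpa using this
  · exact aux_big B E m k hk2 hE' hM D hD1 (fun p hp => (hdrop p hp).1)
end

section
/- Fix an integer d ≥ 1. Let 𝒳 = ℝ_{≥0}^d and let 𝒞 = {h_v : v ∈ ℝ_{≥0}^d} be the class of axis-aligned rectangles containing the origin, where h_v(x) = +1 if x_i ≤ v_i for every coordinate i ∈ [d] and h_v(x) = −1 otherwise. For x ∈ 𝒳 and i ∈ [d], let δ_i(x) ∈ ℝ_{≥0}^d be the vector whose i-th coordinate is x_i and whose other coordinates are 0. Define f_rect on singletons U = {(x,y)} and version spaces V by f_rect(U; V) := |{i ∈ [d] : (δ_i(x), −1) is realizable in V_{x→y}}|. Then f_rect takes values in [0, d] and is a (2d+1, d, 1)-good function for (𝒞, 𝒳). -/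
/-! Basic notions for learning with a concept class `C ⊆ {+1,−1}^𝒳`.  Labeled examples are
pairs in `𝒳 × ℤ` (with labels `±1`). -/

variable {X : Type*}

open scoped Classical

/-- The domain `𝒳 = ℝ_{≥0}^d`. -/
def NonnegVec (d : ℕ) := {x : Fin d → ℝ // ∀ i, 0 ≤ x i}

/-- The axis-aligned rectangle containing the origin with upper corner `v`:
`h_v(x) = +1` iff `x i ≤ v i` for every coordinate `i`. -/
noncomputable def rectConcept {d : ℕ} (v : Fin d → ℝ) : NonnegVec d → ℤ :=
  fun x => if ∀ i, x.1 i ≤ v i then 1 else -1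

/-- The class of axis-aligned rectangles containing the origin in `ℝ_{≥0}^d`. -/
def rectClass (d : ℕ) : Set (NonnegVec d → ℤ) :=
  {h | ∃ v : Fin d → ℝ, (∀ i, 0 ≤ v i) ∧ h = rectConcept v}

/-- `δ_i(x)`: the vector whose `i`-th coordinate is `x i` and whose other coordinates
are `0`. -/
def deltaVec {d : ℕ} (i : Fin d) (x : NonnegVec d) : NonnegVec d :=
  ⟨fun j => if j = i then x.1 i else 0, fun j => by
    by_cases h : j = i <;> simp [h, x.2 i]⟩

/-- The rectangle score function: on a singleton `U = {(x,y)}` (expressed by requiring the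
condition for every member of `U`) it counts the coordinates `i ∈ [d]` such that
`(δ_i(x), −1)` is realizable in `V_{x→y}`. -/
noncomputable def frect (d : ℕ) : Finset (NonnegVec d × ℤ) → Set (NonnegVec d → ℤ) → ℝ :=
  fun U V =>
    (({i : Fin d | ∀ p ∈ U,
        RealizableIn (Restrict V p.1 p.2) (deltaVec i p.1) (-1)}).ncard : ℝ)

theorem frect_mono {d : ℕ} (U : Finset (NonnegVec d × ℤ)) {V W : Set (NonnegVec d → ℤ)}
    (hVW : V ⊆ W) :
    {i : Fin d | ∀ p ∈ U, RealizableIn (Restrict V p.1 p.2) (deltaVec i p.1) (-1)} ⊆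
    {i : Fin d | ∀ p ∈ U, RealizableIn (Restrict W p.1 p.2) (deltaVec i p.1) (-1)} := by
  intro i hi p hp
  obtain ⟨h, ⟨h1, h2⟩, h3⟩ := hi p hp
  exact ⟨h, ⟨hVW h1, h2⟩, h3⟩

theorem frect_bounds {d : ℕ} (U : Finset (NonnegVec d × ℤ)) (V : Set (NonnegVec d → ℤ)) :
    0 ≤ frect d U V ∧ frect d U V ≤ d := by
  refine ⟨Nat.cast_nonneg _, ?_⟩
  unfold frect
  have := Set.ncard_le_card {i : Fin d | ∀ p ∈ U,
        RealizableIn (Restrict V p.1 p.2) (deltaVec i p.1) (-1)}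
  rw [Nat.card_eq_fintype_card, Fintype.card_fin] at this
  exact_mod_cast this

theorem rect_eq_one {d : ℕ} (v : Fin d → ℝ) (x : NonnegVec d) :
    rectConcept v x = 1 ↔ ∀ i, x.1 i ≤ v i := by
  unfold rectConcept
  split_ifs with h <;> simp [h]

theorem rect_eq_neg {d : ℕ} (v : Fin d → ℝ) (x : NonnegVec d) :
    rectConcept v x = -1 ↔ ∃ i, v i < x.1 i := by
  unfold rectConcept
  split_ifs with h
  · simpa using h
  · simpa using h

theorem rect_delta {d : ℕ} (v : Fin d → ℝ) (hv : ∀ i, 0 ≤ v i) (x : NonnegVec d) (i : Fin d) :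
    rectConcept v (deltaVec i x) = -1 ↔ v i < x.1 i := by
  rw [rect_eq_neg]
  constructor
  · rintro ⟨j, hj⟩
    by_cases h : j = i
    · subst h; simpa [deltaVec] using hj
    · have := hv j
      simp [deltaVec, h] at hj
      linarith
  · intro h
    exact ⟨i, by simpa [deltaVec] using h⟩

theorem frect_robust (d : ℕ) (hd : 1 ≤ d) :
    RobustScore (rectClass d) (2 * d + 1) 1 (frect d) := by
  rintro h ⟨v, hv, rfl⟩ M hM hc
  have hlab : ∀ q ∈ M, q.2 ≠ 1 → q.2 = -1 := by
    intro q hq h1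
    rw [← hc q hq] at h1 ⊢
    unfold rectConcept at h1 ⊢
    split_ifs with h2
    · simp [h2] at h1
    · rfl
  have hcard := Finset.card_filter_add_card_filter_not (s := M) (fun q : NonnegVec d × ℤ => q.2 = 1)
  by_cases hP : d + 1 ≤ (M.filter (fun q : NonnegVec d × ℤ => q.2 = 1)).card
  · have hne : (M.filter (fun q : NonnegVec d × ℤ => q.2 = 1)).Nonempty := Finset.card_pos.mp (by omega)
    choose g hg hgmax using fun i : Fin d =>
      Finset.exists_max_image (M.filter (fun q : NonnegVec d × ℤ => q.2 = 1)) (fun q => q.1.1 i) hne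
    have hexp : ∃ p ∈ M.filter (fun q : NonnegVec d × ℤ => q.2 = 1),
        p ∉ Finset.univ.image g := by
      apply Finset.exists_mem_notMem_of_card_lt_card
      have := Finset.card_image_le (s := (Finset.univ : Finset (Fin d))) (f := g)
      simp only [Finset.card_univ, Fintype.card_fin] at this
      omega
    obtain ⟨p, hp, hpg⟩ := hexp
    obtain ⟨u, hu, hup⟩ := Finset.exists_mem_ne (s := M) (by omega) p
    rw [Finset.mem_filter] at hp
    refine ⟨{u}, by simpa using hu, by simp, p, hp.1, by simpa using hup.symm, ?_⟩
    intro A hA hMA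
    right
    rintro ⟨h', ⟨⟨⟨w, hw, rfl⟩, hcA⟩, hflip⟩, hU⟩
    have key : ∀ i, p.1.1 i ≤ w i := by
      intro i
      have h1 := hg i
      rw [Finset.mem_filter] at h1
      have hnp : g i ≠ p := fun e => hpg (by simp [← e])
      have h2 : rectConcept w (g i).1 = (g i).2 := by
        by_cases e : g i = u
        · exact hU _ (by simp [e])
        · exact hcA _ (hMA (by simp [h1.1, hnp, e]))
      rw [h1.2, rect_eq_one] at h2
      exact (hgmax i p (by simp [hp])).trans (h2 i)
    rw [(rect_eq_one w p.1).2 key, hp.2] at hflip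
    norm_num at hflip
  · have hN : d < (M.filter (fun q : NonnegVec d × ℤ => ¬ q.2 = 1)).card := by omega
    have hex : ∀ q : NonnegVec d × ℤ, ∃ i : Fin d,
        q ∈ M.filter (fun q : NonnegVec d × ℤ => ¬ q.2 = 1) → v i < q.1.1 i := by
      intro q
      by_cases hq : q ∈ M.filter (fun q : NonnegVec d × ℤ => ¬ q.2 = 1)
      · have hq' := Finset.mem_filter.1 hq
        have h1 := hc q hq'.1
        rw [hlab q hq'.1 hq'.2, rect_eq_neg] at h1
        obtain ⟨i, hi⟩ := h1
        exact ⟨i, fun _ => hi⟩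
      · exact ⟨⟨0, hd⟩, fun h => absurd h hq⟩
    choose c hcc using hex
    obtain ⟨a, ha, b, hb, hab, hcab⟩ := Finset.exists_ne_map_eq_of_card_lt_of_maps_to
      (s := M.filter (fun q : NonnegVec d × ℤ => ¬ q.2 = 1)) (t := (Finset.univ : Finset (Fin d))) (f := c)
      (by simpa using hN) (fun _ _ => by simp)
    have hexx : ∃ x z : NonnegVec d × ℤ, ∃ i : Fin d,
        x ∈ M.filter (fun q : NonnegVec d × ℤ => ¬ q.2 = 1) ∧ z ∈ M.filter (fun q : NonnegVec d × ℤ => ¬ q.2 = 1) ∧ x ≠ z ∧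
        v i < x.1.1 i ∧ x.1.1 i ≤ z.1.1 i := by
      rcases le_total (a.1.1 (c a)) (b.1.1 (c a)) with hl | hl
      · exact ⟨a, b, c a, ha, hb, hab, hcc a ha, hl⟩
      · exact ⟨b, a, c a, hb, ha, hab.symm, by rw [hcab]; exact hcc b hb, hl⟩
    obtain ⟨x, z, i, hx, hz, hxz, hvx, hle⟩ := hexx
    rw [Finset.mem_filter] at hx hz
    refine ⟨{x}, by simpa using hx.1, by simp, z, hz.1, by simpa using hxz.symm, ?_⟩
    intro A hA _
    left
    have hlt := Set.ncard_lt_ncard (Set.ssubset_iff_subset_ne.2 ⟨frect_mono {x}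
      (V := Restrict (VSpace (rectClass d) A) z.1 (-z.2)) (W := VSpace (rectClass d) A)
      (fun _ hh => hh.1), by
        intro heq
        have hi : i ∈ {i : Fin d | ∀ p ∈ ({x} : Finset (NonnegVec d × ℤ)), RealizableIn
            (Restrict (VSpace (rectClass d) A) p.1 p.2) (deltaVec i p.1) (-1)} := by
          intro p hp
          rw [Finset.mem_singleton] at hp
          subst hp
          exact ⟨rectConcept v, ⟨⟨⟨v, hv, rfl⟩, hA⟩, hc p hx.1⟩, (rect_delta v hv p.1 i).2 hvx⟩
        rw [← heq] at hi
        obtain ⟨h', ⟨⟨⟨⟨w, hw, rfl⟩, _⟩, h3⟩, _⟩, h5⟩ := hi x (by simp)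
        rw [hlab z hz.1 hz.2, neg_neg, rect_eq_one] at h3
        have h6 := (rect_delta w hw x.1 i).1 h5
        have := h3 i
        linarith⟩) (Set.toFinite _)
    have h2 := (Nat.cast_le (α := ℝ)).2 (Nat.succ_le_of_lt hlt)
    rw [Nat.cast_succ] at h2
    unfold frect
    linarith

/-- `f_rect` takes values in `[0, d]` (on singletons) and is a `(2d+1, d, 1)`-good function
for axis-aligned rectangles containing the origin in `ℝ_{≥0}^d`. -/
theorem stmt6 (d : ℕ) (hd : 1 ≤ d) :
    (∀ (U : Finset (NonnegVec d × ℤ)), U.card = 1 → ∀ V : Set (NonnegVec d → ℤ),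
        0 ≤ frect d U V ∧ frect d U V ≤ d) ∧
    IsGood (rectClass d) (2 * d + 1) (d : ℝ) 1 (frect d) := by
  refine ⟨fun U _ V => frect_bounds U V, fun U _ V => frect_bounds U V, ?_, frect_robust d hd⟩
  intro U _ V _ _ x y _
  unfold frect
  exact_mod_cast Set.ncard_le_ncard (frect_mono U (V := Restrict V x y) (W := V)
    (fun _ hh => hh.1)) (Set.toFinite _)
end

section
/- Let ≺ be a partial order on a set 𝒳 that is a tree order, meaning that for every x ∈ 𝒳 the initial segment I(x) := {x' ∈ 𝒳 : x' ⪯ x} is totally ordered by ⪯. Let 𝒞 be the class of initial segments under ≺: all h : 𝒳 → {+1,−1} such that h^{−1}(+1) is downward closed under ⪯ and totally ordered by ⪯. For a version space V, let P(V) := {x' ∈ 𝒳 : V_{x'→−1} = ∅} be the set of points forced positive by V, and define f_seg on singletons by f_seg({(x,y)}; V) := 1 if P(V) ⊆ I(x) and f_seg({(x,y)}; V) := 0 otherwise. Then f_seg is a (3, 1, 1)-good function for (𝒞, 𝒳). -/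
/-! Basic notions for learning with a concept class `C ⊆ {+1,−1}^𝒳`.  Labeled examples are
pairs in `𝒳 × ℤ` (with labels `±1`). -/

variable {X : Type*}

open scoped Classical

/-- The class of initial segments under a partial order: hypotheses `h : X → {+1,−1}`
whose set of positives is downward closed and totally ordered. -/
def InitSegClass (X : Type*) [PartialOrder X] : Set (X → ℤ) :=
  {h | (∀ x, h x = 1 ∨ h x = -1) ∧
       (∀ x y : X, y ≤ x → h x = 1 → h y = 1) ∧
       (∀ x y : X, h x = 1 → h y = 1 → x ≤ y ∨ y ≤ x)}

/-- `P(V)`: the set of points forced positive by the version space `V`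
(those `x'` with `V_{x'→−1} = ∅`). -/
def forcedPos {X : Type*} (V : Set (X → ℤ)) : Set X :=
  {x' | Restrict V x' (-1) = ∅}

/-- The VC-1 score function for initial segments: on a singleton `U = {(x,y)}` (expressed
by requiring the condition for every member of `U`) it is `1` if `P(V) ⊆ I(x)` and `0`
otherwise, where `I(x) = {x' : x' ⪯ x}`. -/
noncomputable def fseg {X : Type*} [PartialOrder X] :
    Finset (X × ℤ) → Set (X → ℤ) → ℝ :=
  fun U V => if ∀ p ∈ U, forcedPos V ⊆ {x' : X | x' ≤ p.1} then 1 else 0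

theorem core_one {X : Type*} [PartialOrder X] (h : X → ℤ) (hh : h ∈ InitSegClass X)
    (u x : X) (hx : h x = -1) (hxu : ¬ x ≤ u)
    (hsub : ∀ z, h z = 1 → z ≤ x → z ≤ u) (A : Set (X × ℤ)) (hA : Consistent h A) :
    1 ≤ fseg {(u, (-1 : ℤ))} (VSpace (InitSegClass X) A)
        - fseg {(u, (-1 : ℤ))} (Restrict (VSpace (InitSegClass X) A) x 1) ∨
      ¬ ∃ h' ∈ Restrict (VSpace (InitSegClass X) A) x 1, h' u = -1 := by
  obtain ⟨h1, h2, h3⟩ := hh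
  by_cases hz : ∀ z, (z, (1 : ℤ)) ∈ A → z ≤ u
  · left
    have e1 : fseg {(u, (-1 : ℤ))} (VSpace (InitSegClass X) A) = 1 := by
      unfold fseg
      rw [if_pos]
      intro p hp t ht
      rw [Finset.mem_singleton] at hp
      subst hp
      change t ≤ u
      by_contra htu
      have hg : (fun t => if ∃ z, (z, (1 : ℤ)) ∈ A ∧ t ≤ z then (1 : ℤ) else -1) ∈
          Restrict (VSpace (InitSegClass X) A) t (-1) := by
        refine ⟨⟨⟨?_, ?_, ?_⟩, ?_⟩, ?_⟩
        · intro w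
          dsimp only
          split_ifs <;> simp
        · intro a b hba ha
          dsimp only at ha ⊢
          split_ifs at ha with hc
          · obtain ⟨z, hzA, haz⟩ := hc
            rw [if_pos ⟨z, hzA, hba.trans haz⟩]
        · intro a b ha hb
          dsimp only at ha hb
          split_ifs at ha with hc
          · split_ifs at hb with hd
            · obtain ⟨z, hzA, haz⟩ := hc
              obtain ⟨w, hwA, hbw⟩ := hd
              exact h3 a b (h2 z a haz (hA _ hzA)) (h2 w b hbw (hA _ hwA))
        · rintro ⟨a, y⟩ hp
          have hy := hA _ hp
          dsimp only at hy ⊢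
          split_ifs with hc
          · obtain ⟨z, hzA, haz⟩ := hc
            rw [← hy, h2 z a haz (hA _ hzA)]
          · rcases h1 a with h' | h'
            · exfalso
              rw [← hy, h'] at hp
              exact hc ⟨a, hp, le_rfl⟩
            · rw [← hy, h']
        · dsimp only
          rw [if_neg]
          rintro ⟨z, hzA, haz⟩
          exact htu (haz.trans (hz z hzA))
      have ht' : Restrict (VSpace (InitSegClass X) A) t (-1) = ∅ := ht
      rw [ht'] at hg
      exact hg
    have e2 : fseg {(u, (-1 : ℤ))} (Restrict (VSpace (InitSegClass X) A) x 1) = 0 := by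
      unfold fseg
      rw [if_neg]
      intro hc
      apply hxu
      apply hc (u, -1) (Finset.mem_singleton_self _)
      change Restrict _ _ _ = ∅
      ext g
      constructor
      · rintro ⟨⟨_, ha⟩, hb⟩
        rw [ha] at hb
        norm_num at hb
      · intro hg
        exact hg.elim
    rw [e1, e2]
    norm_num
  · right
    push Not at hz
    obtain ⟨z, hzA, hzu⟩ := hz
    rintro ⟨g, ⟨⟨⟨g1, g2, g3⟩, hgA⟩, hgx⟩, -⟩
    have hhz : h z = 1 := hA _ hzA
    rcases g3 z x (hgA _ hzA) hgx with hc | hc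
    · exact hzu (hsub z hhz hc)
    · have := h2 z x hc hhz
      rw [hx] at this
      norm_num at this

theorem core_two {X : Type*} [PartialOrder X] (h : X → ℤ) (hh : h ∈ InitSegClass X)
    (M : Finset (X × ℤ)) (hM : Consistent h ↑M) (p q : X × ℤ) (hp : p ∈ M) (hq : q ∈ M)
    (hpq : p ≠ q) (hl : p.2 = q.2) :
    ∃ U ⊆ M, U.card = 1 ∧ ∃ p ∈ M, p ∉ U ∧
      ∀ A : Set (X × ℤ), Consistent h A → ↑(M \ insert p U) ⊆ A →
        (1 ≤ fseg U (VSpace (InitSegClass X) A)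
            - fseg U (Restrict (VSpace (InitSegClass X) A) p.1 (-p.2)) ∨
          ¬ ∃ h' ∈ Restrict (VSpace (InitSegClass X) A) p.1 (-p.2), Consistent h' ↑U) := by
  have hh' := hh
  obtain ⟨h1, h2, h3⟩ := hh'
  obtain ⟨a, y⟩ := p
  obtain ⟨b, y'⟩ := q
  dsimp only at hl
  subst hl
  have ha : h a = y := hM _ hp
  have hb : h b = y := hM _ hq
  have hcons : ∀ (g : X → ℤ) (c : X), Consistent g ↑({(c, y)} : Finset (X × ℤ)) ↔ g c = y := by
    intro g c
    simp [Consistent]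
  rcases h1 a with hy | hy
  · have hy1 : y = 1 := ha.symm.trans hy
    subst hy1
    have key : ∀ c d : X, c ≤ d → ∀ A : Set (X × ℤ),
        ¬ ∃ h' ∈ Restrict (VSpace (InitSegClass X) A) c (-1), h' d = 1 := by
      rintro c d hcd A ⟨g, ⟨⟨⟨g1, g2, g3⟩, -⟩, hgc⟩, hgd⟩
      rw [g2 d c hcd hgd] at hgc
      norm_num at hgc
    rcases h3 a b ha hb with hab | hab
    · refine ⟨{(b, 1)}, by simpa using hq, by simp, (a, 1), hp, by simpa using hpq, ?_⟩
      intro A _ _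
      right
      simp only [hcons]
      exact key a b hab A
    · refine ⟨{(a, 1)}, by simpa using hp, by simp, (b, 1), hq, by simpa using hpq.symm, ?_⟩
      intro A _ _
      right
      simp only [hcons]
      exact key b a hab A
  · have hy1 : y = -1 := ha.symm.trans hy
    subst hy1
    have key : ∀ c d : X, c ≤ d → ∀ A : Set (X × ℤ),
        ¬ ∃ h' ∈ Restrict (VSpace (InitSegClass X) A) d 1, h' c = -1 := by
      rintro c d hcd A ⟨g, ⟨⟨⟨g1, g2, g3⟩, -⟩, hgc⟩, hgd⟩
      rw [g2 d c hcd hgc] at hgd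
      norm_num at hgd
    by_cases hab : a ≤ b
    · refine ⟨{(a, -1)}, by simpa using hp, by simp, (b, -1), hq, by simpa using hpq.symm, ?_⟩
      intro A _ _
      right
      simp only [hcons, neg_neg]
      exact key a b hab A
    by_cases hba : b ≤ a
    · refine ⟨{(b, -1)}, by simpa using hq, by simp, (a, -1), hp, by simpa using hpq, ?_⟩
      intro A _ _
      right
      simp only [hcons, neg_neg]
      exact key b a hba A
    by_cases hs : ∀ z, h z = 1 → z ≤ b → z ≤ a
    · refine ⟨{(a, -1)}, by simpa using hp, by simp, (b, -1), hq, by simpa using hpq.symm, ?_⟩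
      intro A hA _
      simp only [hcons, neg_neg]
      exact core_one h hh a b hb hba hs A hA
    · refine ⟨{(b, -1)}, by simpa using hq, by simp, (a, -1), hp, by simpa using hpq, ?_⟩
      intro A hA _
      simp only [hcons, neg_neg]
      refine core_one h hh b a ha hab ?_ A hA
      intro w hw hwa
      push Not at hs
      obtain ⟨z, hz, hzb, hza⟩ := hs
      rcases h3 z w hz hw with hc | hc
      · exact absurd (hc.trans hwa) hza
      · exact hc.trans hzb

/-- For a tree order (every initial segment `I(x)` is totally ordered), the score function
`f_seg` is a `(3,1,1)`-good function for the class of initial segments. -/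
theorem stmt7 {X : Type*} [PartialOrder X]
    (htree : ∀ x a b : X, a ≤ x → b ≤ x → a ≤ b ∨ b ≤ a) :
    IsGood (InitSegClass X) 3 1 1 (fseg (X := X)) := by
  refine ⟨?_, ?_, ?_⟩
  · intro U _ V
    unfold fseg
    split_ifs <;> norm_num
  · intro U _ V _ _ x y _
    unfold fseg
    split_ifs with hc hd
    · exact le_rfl
    · exfalso
      apply hd
      intro p hp t ht
      apply hc p hp
      change Restrict V t (-1) = ∅ at ht
      change Restrict _ _ _ = ∅
      ext g
      constructor
      · rintro ⟨⟨hg, _⟩, hgt⟩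
        rw [← ht]
        exact ⟨hg, hgt⟩
      · intro hg
        exact hg.elim
    · norm_num
    · exact le_rfl
  · intro h hh M hcard hM
    obtain ⟨p, q, r, hpq, hpr, hqr, rfl⟩ := Finset.card_eq_three.mp hcard
    have hp : p ∈ ({p, q, r} : Finset (X × ℤ)) := by simp
    have hq : q ∈ ({p, q, r} : Finset (X × ℤ)) := by simp
    have hr : r ∈ ({p, q, r} : Finset (X × ℤ)) := by simp
    have lp := hM p hp
    have lq := hM q hq
    have lr := hM r hr
    have h1 := hh.1
    by_cases e1 : p.2 = q.2
    · exact core_two h hh _ hM p q hp hq hpq e1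
    by_cases e2 : p.2 = r.2
    · exact core_two h hh _ hM p r hp hr hpr e2
    · refine core_two h hh _ hM q r hq hr hqr ?_
      have := h1 p.1
      have := h1 q.1
      have := h1 r.1
      omega
end

section
/- Let 𝒞 ⊆ {+1,−1}^𝒳 be a concept class admitting a real-valued representation, and suppose (𝒞, 𝒳) has inference dimension k ≥ 1. Then (𝒞, 𝒳) has certificate dimension k with parameters (m, n) = (k, 2^{k−1} · k!). -/
/-! Basic notions for learning with a concept class `C ⊆ {+1,−1}^𝒳`.  Labeled examples are
pairs in `𝒳 × ℤ` (with labels `±1`). -/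

variable {X : Type*}

/-- `(C, 𝒳)` has certificate dimension `k` with parameters `(m, n)`: there is a certificate
function `σ` mapping a hypothesis and a size-`(k−1)` set of labeled examples into
`{0, …, n−1}` such that for every `h ∈ C` and every set `S` of `m` labeled examples labeled
by `h`, there exist `U ⊆ S` with `|U| = k` and `(x,y) ∈ U` such that every
`h' ∈ 𝒱(S ∖ {(x,y)})` whose certificate value on `U ∖ {(x,y)}` agrees with that of `h`
satisfies `h'(x) = h(x) = y`. -/
def CertDim {X : Type*} [DecidableEq X] (C : Set (X → ℤ)) (k m n : ℕ) : Prop :=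
  ∃ σ : (X → ℤ) → Finset (X × ℤ) → ℕ,
    (∀ (h : X → ℤ) (W : Finset (X × ℤ)), W.card = k - 1 → σ h W < n) ∧
    ∀ h ∈ C, ∀ S : Finset (X × ℤ), S.card = m → Consistent h ↑S →
      ∃ U ⊆ S, U.card = k ∧ ∃ p ∈ U,
        ∀ h' ∈ VSpace C ↑(S.erase p), σ h' (U.erase p) = σ h (U.erase p) →
          h' p.1 = h p.1 ∧ h p.1 = p.2

open scoped Classical

/-- Equality of the comparison-query transcripts `Q_h(S)` and `Q_{h'}(S)` for the
real-valued representation `F`: the sign bits `1[F h z ≥ 0]` and the comparison bits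
`1[F h z ≥ F h z']` agree on `S`. -/
def TranscriptEq {X : Type*} (F : (X → ℤ) → X → ℝ) (S : Finset X)
    (h h' : X → ℤ) : Prop :=
  (∀ z ∈ S, (0 ≤ F h z ↔ 0 ≤ F h' z)) ∧
  (∀ z ∈ S, ∀ z' ∈ S, (F h z' ≤ F h z ↔ F h' z' ≤ F h' z))

/-- `S ∖ {x}` infers `x` under `h`: every `h' ∈ C` with the same comparison-query
transcript as `h` on `S ∖ {x}` agrees with `h` at `x`. -/
def Infers {X : Type*} [DecidableEq X] (C : Set (X → ℤ)) (F : (X → ℤ) → X → ℝ)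
    (S : Finset X) (x : X) (h : X → ℤ) : Prop :=
  ∀ h' ∈ C, TranscriptEq F (S.erase x) h h' → h' x = h x

/-- The inference-dimension property at `k`: every size-`k` subset `S` of the domain,
for every `h ∈ C`, contains a point inferred by the rest of `S` under `h`. -/
def InfDimProp {X : Type*} [DecidableEq X] (C : Set (X → ℤ)) (F : (X → ℤ) → X → ℝ)
    (k : ℕ) : Prop :=
  ∀ S : Finset X, S.card = k → ∀ h ∈ C, ∃ x ∈ S, Infers C F S x h

noncomputable def ordCode {j : ℕ} (g : Fin j → ℝ) : Equiv.Perm (Fin j) × (Fin j → Bool) :=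
  (Tuple.sort g, fun i => decide (∃ l < i, g (Tuple.sort g i) = g (Tuple.sort g l)))

theorem tie_iff {j : ℕ} (f : Fin j → ℝ) (hf : Monotone f) (s t : Fin j) (hst : s ≤ t) :
    f t ≤ f s ↔ ∀ i, s < i → i ≤ t → ∃ l < i, f i = f l := by
  constructor
  · intro h i hi hit
    exact ⟨s, hi, le_antisymm ((hf hit).trans h) (hf hi.le)⟩
  · intro h
    have key : ∀ i : Fin j, s ≤ i → i ≤ t → f i ≤ f s := by
      intro i
      induction i using WellFoundedLT.induction with
      | ind i ih =>
        intro h1 h2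
        rcases h1.eq_or_lt with rfl | h1
        · exact le_rfl
        · obtain ⟨l, hl, e⟩ := h i h1 h2
          rw [e]
          rcases le_total s l with h3 | h3
          · exact ih l hl h3 (hl.le.trans h2)
          · exact hf h3
    exact key t hst le_rfl

theorem ordCode_spec {j : ℕ} (g g' : Fin j → ℝ) (h : ordCode g = ordCode g') (a b : Fin j) :
    g a ≤ g b ↔ g' a ≤ g' b := by
  have h1 : Tuple.sort g = Tuple.sort g' := congrArg Prod.fst h
  have h2 := congrArg Prod.snd h
  have m := Tuple.monotone_sort g
  have m' := Tuple.monotone_sort g'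
  simp only [ordCode] at h2
  rw [← h1] at h2 m'
  generalize Tuple.sort g = π at h2 m m'
  obtain ⟨s, rfl⟩ := π.surjective a
  obtain ⟨t, rfl⟩ := π.surjective b
  rcases le_total s t with hst | hst
  · exact ⟨fun _ => m' hst, fun _ => m hst⟩
  · have e1 := tie_iff _ m t s hst
    have e2 := tie_iff _ m' t s hst
    simp only [Function.comp] at e1 e2
    rw [e1, e2]
    have h3 : ∀ i, (∃ l < i, g (π i) = g (π l)) ↔ ∃ l < i, g' (π i) = g' (π l) := by
      intro i
      have := congrFun h2 i
      simpa only [decide_eq_decide] using this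
    simp only [h3]

noncomputable def certFun {X : Type*} (F : (X → ℤ) → X → ℝ) (h : X → ℤ)
    (W : Finset (X × ℤ)) : ℕ :=
  (Fintype.equivFin (Equiv.Perm (Fin W.card) × (Fin W.card → Bool))
    (ordCode (fun i => F h (W.equivFin.symm i).1.1))).1

theorem certFun_lt {X : Type*} (F : (X → ℤ) → X → ℝ) (h : X → ℤ)
    (W : Finset (X × ℤ)) : certFun F h W < Nat.factorial W.card * 2 ^ W.card := by
  unfold certFun
  refine (Fin.is_lt _).trans_le (le_of_eq ?_)
  simp [Fintype.card_perm]

theorem certFun_spec {X : Type*} (F : (X → ℤ) → X → ℝ) (h h' : X → ℤ)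
    (W : Finset (X × ℤ)) (e : certFun F h W = certFun F h' W) (p q : X × ℤ)
    (hp : p ∈ W) (hq : q ∈ W) : F h p.1 ≤ F h q.1 ↔ F h' p.1 ≤ F h' q.1 := by
  have e1 := (Fintype.equivFin _).injective (Fin.ext e)
  have := ordCode_spec _ _ e1 (W.equivFin ⟨p, hp⟩) (W.equivFin ⟨q, hq⟩)
  simpa using this

/-- If `C` admits a real-valued representation `F` (so `h x = sign (F h x)` with
`sign t = +1` iff `t ≥ 0`) and `(C, 𝒳)` has inference dimension `k ≥ 1` (the smallest
integer with the inference property), then `(C, 𝒳)` has certificate dimension `k` with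
parameters `(m, n) = (k, 2^{k−1}·k!)`. -/
theorem stmt10 {X : Type*} [DecidableEq X] (C : Set (X → ℤ))
    (F : (X → ℤ) → X → ℝ)
    (hrep : ∀ h ∈ C, ∀ x : X, h x = if 0 ≤ F h x then 1 else -1)
    (k : ℕ) (hk : 1 ≤ k)
    (hinf : InfDimProp C F k) (hmin : ∀ j < k, ¬ InfDimProp C F j) :
    CertDim C k k (2 ^ (k - 1) * Nat.factorial k) := by
  refine ⟨certFun F, ?_, ?_⟩
  · intro h W hW
    refine (certFun_lt F h W).trans_le ?_
    rw [hW, mul_comm]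
    exact Nat.mul_le_mul_left _ (Nat.factorial_le (Nat.sub_le _ _))
  · intro h hC S hS hcons
    have hinj : Set.InjOn Prod.fst (S : Set (X × ℤ)) := by
      intro p hp q hq e
      refine Prod.ext e ?_
      rw [← hcons p hp, ← hcons q hq, e]
    obtain ⟨x, hx, hI⟩ := hinf (S.image Prod.fst)
      ((Finset.card_image_of_injOn hinj).trans hS) h hC
    obtain ⟨p, hp, rfl⟩ := Finset.mem_image.1 hx
    refine ⟨S, subset_rfl, hS, p, hp, ?_⟩
    rintro h' ⟨hC', hcons'⟩ hσ
    refine ⟨hI h' hC' ?_, hcons p hp⟩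
    have hz : ∀ z ∈ (S.image Prod.fst).erase p.1, ∃ q ∈ S.erase p, q.1 = z := by
      intro z hz
      obtain ⟨hne, hz⟩ := Finset.mem_erase.1 hz
      obtain ⟨q, hq, rfl⟩ := Finset.mem_image.1 hz
      exact ⟨q, Finset.mem_erase.2 ⟨fun e => hne (by rw [e]), hq⟩, rfl⟩
    constructor
    · intro z hzm
      obtain ⟨q, hq, rfl⟩ := hz z hzm
      have e1 := hcons q (Finset.mem_of_mem_erase hq)
      have e2 := hcons' q (Finset.mem_coe.2 hq)
      rw [← e2, hrep h hC, hrep h' hC'] at e1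
      clear hz hzm hq e2
      split_ifs at e1 with a b b
      · exact ⟨fun _ => b, fun _ => a⟩
      · exact ⟨fun c => absurd c a, fun c => absurd c b⟩
    · intro z hzm z' hzm'
      obtain ⟨q, hq, rfl⟩ := hz z hzm
      obtain ⟨q', hq', rfl⟩ := hz z' hzm'
      exact certFun_spec F h h' _ hσ.symm q' q hq' hq
end

section
/- Fix distinct points s₊, s₋ ∈ ℝ². Let sign(t) = +1 if t ≥ 0 and −1 otherwise, and let 𝒞 = {x ↦ sign(wᵀx − b) : w ∈ ℝ², b ∈ ℝ, wᵀs₊ ≥ b > wᵀs₋} be the class of two-dimensional {(s₊,+1),(s₋,−1)}-halfspaces over 𝒳 = ℝ². Then (𝒞, ℝ²) has certificate dimension 3 with parameters (m, n) = (7, 3). -/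
/-! Basic notions for learning with a concept class `C ⊆ {+1,−1}^𝒳`.  Labeled examples are
pairs in `𝒳 × ℤ` (with labels `±1`). -/

variable {X : Type*}

open scoped Classical
open Matrix

/-- `sign t = +1` if `t ≥ 0` and `−1` otherwise. -/
noncomputable def signR (t : ℝ) : ℤ := if 0 ≤ t then 1 else -1

/-- The class of two-dimensional `{(s₊,+1),(s₋,−1)}`-halfspaces:
all `x ↦ sign(wᵀx − b)` with `w ∈ ℝ²`, `b ∈ ℝ`, and `wᵀs₊ ≥ b > wᵀs₋`. -/
def Halfspaces (sp sm : Fin 2 → ℝ) : Set ((Fin 2 → ℝ) → ℤ) :=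
  {h | ∃ (w : Fin 2 → ℝ) (b : ℝ), b ≤ w ⬝ᵥ sp ∧ w ⬝ᵥ sm < b ∧
        h = fun x => signR (w ⬝ᵥ x - b)}

namespace Cert12

abbrev V := Fin 2 → ℝ

noncomputable def key (w x : V) : ℝ ×ₗ (Lex (Fin 2 → ℝ)) := toLex (w ⬝ᵥ x, toLex x)

lemma key_inj (w x y : V) (h : key w x = key w y) : x = y := by
  have h1 := congrArg (fun z => (ofLex z).2) h
  simpa [key] using h1

lemma key_le (w x y : V) (h : key w x ≤ key w y) : w ⬝ᵥ x ≤ w ⬝ᵥ y := by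
  rw [key, key, Prod.Lex.toLex_le_toLex] at h
  rcases h with h | h
  · exact h.le
  · exact h.1.le

lemma exists_A (w : V) (F : Finset V) : ∃ t, F.Nonempty → t ∈ F ∧ ∀ x ∈ F, key w t ≤ key w x := by
  by_cases hF : F.Nonempty
  · obtain ⟨t, h1, h2⟩ := F.exists_min_image (key w) hF
    exact ⟨t, fun _ => ⟨h1, h2⟩⟩
  · exact ⟨0, fun h => absurd h hF⟩

noncomputable def A (w : V) (F : Finset V) : V := (exists_A w F).choose

lemma A_mem (w : V) (F : Finset V) (h : F.Nonempty) : A w F ∈ F := ((exists_A w F).choose_spec h).1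

lemma A_key (w : V) (F : Finset V) (x : V) (hx : x ∈ F) : key w (A w F) ≤ key w x :=
  ((exists_A w F).choose_spec ⟨x, hx⟩).2 x hx

lemma A_le (w : V) (F : Finset V) (x : V) (hx : x ∈ F) : w ⬝ᵥ (A w F) ≤ w ⬝ᵥ x :=
  key_le _ _ _ (A_key w F x hx)

lemma A_sub (w : V) (F G : Finset V) (h : F ⊆ G) (hm : A w G ∈ F) : A w F = A w G :=
  key_inj w _ _ (le_antisymm (A_key w F _ hm) (A_key w G _ (h (A_mem w F ⟨_, hm⟩))))

noncomputable def code (F : Finset V) (x : V) : ℕ :=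
  if h : x ∈ F then (F.equivFin ⟨x, h⟩ : ℕ) else 0

lemma code_lt (F : Finset V) (x : V) (h : F.card ≤ 3) : code F x < 3 := by
  unfold code
  split_ifs with hx
  · exact lt_of_lt_of_le (F.equivFin ⟨x, hx⟩).2 h
  · norm_num

lemma code_inj (F : Finset V) (x y : V) (hx : x ∈ F) (hy : y ∈ F) (h : code F x = code F y) :
    x = y := by
  simp only [code, hx, hy, dif_pos] at h
  have := F.equivFin.injective (Fin.ext h)
  simpa using this

def det (x y : V) : ℝ := x 0 * y 1 - x 1 * y 0

lemma two_aux (w t x y : V) (ht : 0 < w ⬝ᵥ t) (hx : w ⬝ᵥ t ≤ w ⬝ᵥ x) (hy : w ⬝ᵥ t ≤ w ⬝ᵥ y)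
    (hA : 0 ≤ det t x) (hD : 0 ≤ det t y) (hB : 0 ≤ det x y) :
    (∀ v : V, 0 < v ⬝ᵥ t → v ⬝ᵥ t ≤ v ⬝ᵥ y → v ⬝ᵥ t ≤ v ⬝ᵥ x) ∨
    (∀ v : V, 0 < v ⬝ᵥ t → v ⬝ᵥ t ≤ v ⬝ᵥ x → v ⬝ᵥ t ≤ v ⬝ᵥ y) := by
  have key : ∀ v : V, det t y * (v ⬝ᵥ x) = det t x * (v ⬝ᵥ y) + det x y * (v ⬝ᵥ t) := by
    intro v; simp only [det, dotProduct, Fin.sum_univ_two]; ring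
  rcases hD.eq_or_lt with hD | hD
  · right
    intro v hv _
    have e : (w ⬝ᵥ t) * (v ⬝ᵥ y) - (w ⬝ᵥ y) * (v ⬝ᵥ t) = det w v * det t y := by
      simp only [det, dotProduct, Fin.sum_univ_two]; ring
    rw [← hD, mul_zero] at e
    refine le_of_mul_le_mul_left ?_ ht
    nlinarith
  · by_cases hs : det t y ≤ det t x + det x y
    · left
      intro v hv h
      refine le_of_mul_le_mul_left ?_ hD
      rw [key v]
      nlinarith [mul_le_mul_of_nonneg_left h hA, mul_le_mul_of_nonneg_right hs hv.le]
    · right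
      push Not at hs
      rcases hA.eq_or_lt with hA | hA
      · exfalso
        have := key w
        rw [← hA] at this hs
        nlinarith
      · intro v hv h
        refine le_of_mul_le_mul_left ?_ hA
        have := key v
        nlinarith [mul_le_mul_of_nonneg_left h hD.le, mul_le_mul_of_nonneg_right hs.le hv.le]

lemma two_pos (w t x y : V) (ht : 0 < w ⬝ᵥ t) (hx : w ⬝ᵥ t ≤ w ⬝ᵥ x) (hy : w ⬝ᵥ t ≤ w ⬝ᵥ y)
    (hA : 0 ≤ det t x) (hD : 0 ≤ det t y) :
    (∀ v : V, 0 < v ⬝ᵥ t → v ⬝ᵥ t ≤ v ⬝ᵥ y → v ⬝ᵥ t ≤ v ⬝ᵥ x) ∨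
    (∀ v : V, 0 < v ⬝ᵥ t → v ⬝ᵥ t ≤ v ⬝ᵥ x → v ⬝ᵥ t ≤ v ⬝ᵥ y) := by
  rcases le_total 0 (det x y) with h | h
  · exact two_aux w t x y ht hx hy hA hD h
  · refine (two_aux w t y x ht hy hx hD hA ?_).symm
    simp only [det] at h ⊢; linarith

def flip (x : V) : V := ![x 0, - x 1]

lemma flip_dot (v x : V) : flip v ⬝ᵥ flip x = v ⬝ᵥ x := by
  simp [flip, dotProduct, Fin.sum_univ_two]

lemma flip_det (v x : V) : det (flip v) (flip x) = - det v x := by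
  simp [flip, det]; ring

lemma two_neg (w t x y : V) (ht : 0 < w ⬝ᵥ t) (hx : w ⬝ᵥ t ≤ w ⬝ᵥ x) (hy : w ⬝ᵥ t ≤ w ⬝ᵥ y)
    (hA : det t x ≤ 0) (hD : det t y ≤ 0) :
    (∀ v : V, 0 < v ⬝ᵥ t → v ⬝ᵥ t ≤ v ⬝ᵥ y → v ⬝ᵥ t ≤ v ⬝ᵥ x) ∨
    (∀ v : V, 0 < v ⬝ᵥ t → v ⬝ᵥ t ≤ v ⬝ᵥ x → v ⬝ᵥ t ≤ v ⬝ᵥ y) := by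
  have := two_pos (flip w) (flip t) (flip x) (flip y) (by rwa [flip_dot])
    (by rwa [flip_dot, flip_dot]) (by rwa [flip_dot, flip_dot])
    (by rw [flip_det]; linarith) (by rw [flip_det]; linarith)
  rcases this with h | h
  · left; intro v; have := h (flip v); simpa only [flip_dot] using this
  · right; intro v; have := h (flip v); simpa only [flip_dot] using this

lemma pigeon (w t : V) (s : V) (R : Finset V) (hR : 3 ≤ R.card) (ht : 0 < w ⬝ᵥ (t - s))
    (hx : ∀ x ∈ R, w ⬝ᵥ (t - s) ≤ w ⬝ᵥ (x - s)) :
    ∃ p ∈ R, ∃ o ∈ R, p ≠ o ∧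
      ∀ v : V, 0 < v ⬝ᵥ (t - s) → v ⬝ᵥ (t - s) ≤ v ⬝ᵥ (o - s) → v ⬝ᵥ (t - s) ≤ v ⬝ᵥ (p - s) := by
  obtain ⟨b, hb, c, hc, d, hd, hbc, hbd, hcd⟩ := Finset.two_lt_card.1 hR
  have main : ∃ x ∈ R, ∃ y ∈ R, x ≠ y ∧ ((0 ≤ det (t - s) (x - s) ∧ 0 ≤ det (t - s) (y - s)) ∨
      (det (t - s) (x - s) ≤ 0 ∧ det (t - s) (y - s) ≤ 0)) := by
    rcases le_total 0 (det (t - s) (b - s)) with h1 | h1 <;>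
    rcases le_total 0 (det (t - s) (c - s)) with h2 | h2 <;>
    rcases le_total 0 (det (t - s) (d - s)) with h3 | h3 <;>
    first
    | exact ⟨b, hb, c, hc, hbc, Or.inl ⟨h1, h2⟩⟩
    | exact ⟨b, hb, c, hc, hbc, Or.inr ⟨h1, h2⟩⟩
    | exact ⟨b, hb, d, hd, hbd, Or.inl ⟨h1, h3⟩⟩
    | exact ⟨b, hb, d, hd, hbd, Or.inr ⟨h1, h3⟩⟩
    | exact ⟨c, hc, d, hd, hcd, Or.inl ⟨h2, h3⟩⟩
    | exact ⟨c, hc, d, hd, hcd, Or.inr ⟨h2, h3⟩⟩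
  obtain ⟨x, hxR, y, hyR, hxy, h⟩ := main
  have : (∀ v : V, 0 < v ⬝ᵥ (t - s) → v ⬝ᵥ (t - s) ≤ v ⬝ᵥ (y - s) → v ⬝ᵥ (t - s) ≤ v ⬝ᵥ (x - s)) ∨
    (∀ v : V, 0 < v ⬝ᵥ (t - s) → v ⬝ᵥ (t - s) ≤ v ⬝ᵥ (x - s) → v ⬝ᵥ (t - s) ≤ v ⬝ᵥ (y - s)) := by
    rcases h with h | h
    · exact two_pos w _ _ _ ht (hx x hxR) (hx y hyR) h.1 h.2
    · exact two_neg w _ _ _ ht (hx x hxR) (hx y hyR) h.1 h.2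
  rcases this with h | h
  · exact ⟨x, hxR, y, hyR, hxy, h⟩
  · exact ⟨y, hyR, x, hxR, hxy.symm, h⟩

lemma core (s a w : V) (T : Finset V) (hT : 4 ≤ T.card) (ha : 0 < w ⬝ᵥ (a - s))
    (hpos : ∀ x ∈ T, 0 < w ⬝ᵥ (x - s)) :
    ∃ p ∈ T, ∃ q ∈ T, ∃ r ∈ T, p ≠ q ∧ p ≠ r ∧ q ≠ r ∧
      ∀ (v : V) (P : ℝ → Prop), (∀ c d, c ≤ d → P c → P d) → (∀ c, P c → 0 < c) →
        P (v ⬝ᵥ (a - s)) → (∀ x ∈ T, x ≠ p → P (v ⬝ᵥ (x - s))) →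
        A v {a, q, r} = A w {a, q, r} → P (v ⬝ᵥ (p - s)) := by
  set t := A w (insert a T) with ht
  have htm : t ∈ insert a T := A_mem _ _ (Finset.insert_nonempty _ _)
  have htpos : 0 < w ⬝ᵥ (t - s) := by
    rcases Finset.mem_insert.1 htm with h | h
    · rw [h]; exact ha
    · exact hpos _ h
  have hR : 3 ≤ (T.erase t).card := by
    have := Finset.pred_card_le_card_erase (s := T) (a := t); omega
  obtain ⟨p, hp, o, ho, hpo, H⟩ := pigeon w t s (T.erase t) hR htpos (by
    intro x hx
    have := A_le w (insert a T) x (Finset.mem_insert_of_mem (Finset.mem_of_mem_erase hx))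
    rw [← ht] at this
    rw [dotProduct_sub, dotProduct_sub]; linarith)
  have hpT := Finset.mem_of_mem_erase hp
  have hoT := Finset.mem_of_mem_erase ho
  have hpt := Finset.ne_of_mem_erase hp
  have hot := Finset.ne_of_mem_erase ho
  have hr : ∃ r ∈ T, p ≠ r ∧ o ≠ r ∧ t ∈ ({a, o, r} : Finset V) := by
    by_cases h : t ∈ T
    · exact ⟨t, h, hpt, hot, by simp⟩
    · have hta : t = a := by
        rcases Finset.mem_insert.1 htm with h' | h'
        · exact h'
        · exact absurd h' h
      have : 0 < ((T.erase p).erase o).card := by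
        have h1 := Finset.pred_card_le_card_erase (s := T) (a := p)
        have h2 := Finset.pred_card_le_card_erase (s := T.erase p) (a := o)
        omega
      obtain ⟨r, hr⟩ := Finset.card_pos.1 this
      simp only [Finset.mem_erase] at hr
      exact ⟨r, hr.2.2, Ne.symm hr.2.1, Ne.symm hr.1, by simp [hta]⟩
  obtain ⟨r, hrT, hpr, hor, htF⟩ := hr
  refine ⟨p, hpT, o, hoT, r, hrT, hpo, hpr, hor, ?_⟩
  intro v P hup hP hPa hPx hA
  have hsub : ({a, o, r} : Finset V) ⊆ insert a T := by
    intro z hz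
    simp only [Finset.mem_insert, Finset.mem_singleton] at hz ⊢
    rcases hz with h | h | h
    · exact Or.inl h
    · right; rw [h]; exact hoT
    · right; rw [h]; exact hrT
  have e : A w {a, o, r} = t := A_sub w _ _ hsub htF
  rw [e] at hA
  have hPt : P (v ⬝ᵥ (t - s)) := by
    rcases Finset.mem_insert.1 htm with h | h
    · rw [h]; exact hPa
    · exact hPx t h (Ne.symm hpt)
  have hle := A_le v {a, o, r} o (by simp)
  rw [hA] at hle
  refine hup _ _ (H v (hP _ hPt) ?_) hPt
  rw [dotProduct_sub, dotProduct_sub]; linarith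

/-- one-sided representation -/
def Rep (s a : V) (y : ℤ) (h : V → ℤ) (w : V) : Prop :=
  ∃ P : ℝ → Prop, (∀ c d, c ≤ d → P c → P d) ∧ (∀ c, P c → 0 < c) ∧
    P (w ⬝ᵥ (a - s)) ∧ ∀ x, h x = y ↔ P (w ⬝ᵥ (x - s))

lemma rep_pos (sp sm : V) (h : V → ℤ) (hh : h ∈ Halfspaces sp sm) : ∃ w, Rep sm sp 1 h w := by
  obtain ⟨w, b, h1, h2, rfl⟩ := hh
  refine ⟨w, fun c => b - w ⬝ᵥ sm ≤ c, fun c d h h' => h'.trans h, ?_, ?_, ?_⟩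
  · intro c hc; linarith
  · rw [dotProduct_sub]; linarith
  · intro x
    rw [dotProduct_sub]
    simp only [signR]
    split_ifs with h
    · simpa using h
    · simpa using h

lemma rep_neg (sp sm : V) (h : V → ℤ) (hh : h ∈ Halfspaces sp sm) : ∃ w, Rep sp sm (-1) h w := by
  obtain ⟨w, b, h1, h2, rfl⟩ := hh
  refine ⟨-w, fun c => w ⬝ᵥ sp - b < c, fun c d h h' => h'.trans_le h, ?_, ?_, ?_⟩
  · intro c hc; linarith
  · rw [dotProduct_sub, neg_dotProduct, neg_dotProduct]; linarith
  · intro x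
    rw [dotProduct_sub, neg_dotProduct, neg_dotProduct]
    simp only [signR]
    split_ifs with h
    · constructor
      · intro h; norm_num at h
      · intro h; linarith
    · constructor
      · intro _; linarith
      · intro _; rfl

lemma side (C : Set (V → ℤ)) (s a : V) (y : ℤ) (W : (V → ℤ) → V)
    (hW : ∀ h ∈ C, Rep s a y h (W h)) (σ : (V → ℤ) → Finset (V × ℤ) → ℕ)
    (hσ : ∀ h q r, σ h {(q, y), (r, y)} = code {a, q, r} (A (W h) {a, q, r}))
    (h : V → ℤ) (hh : h ∈ C) (S : Finset (V × ℤ)) (hS : Consistent h ↑S)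
    (hc : 4 ≤ (S.filter (fun p => p.2 = y)).card) :
      ∃ U ⊆ S, U.card = 3 ∧ ∃ p ∈ U,
        ∀ h' ∈ VSpace C ↑(S.erase p), σ h' (U.erase p) = σ h (U.erase p) →
          h' p.1 = h p.1 ∧ h p.1 = p.2 := by
  set T := (S.filter (fun p => p.2 = y)).image Prod.fst with hT
  have hcT : T.card = (S.filter (fun p => p.2 = y)).card := by
    apply Finset.card_image_of_injOn
    intro p hp q hq e
    simp only [Finset.coe_filter, Set.mem_ofPred_eq] at hp hq
    exact Prod.ext e (hp.2.trans hq.2.symm)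
  have hmem : ∀ x, x ∈ T → (x, y) ∈ S := by
    intro x hx
    simp only [hT, Finset.mem_image, Finset.mem_filter] at hx
    obtain ⟨⟨x', y'⟩, ⟨h1, h2⟩, h3⟩ := hx
    simp only at h2 h3
    subst h2 h3
    exact h1
  obtain ⟨P, hup, hP, hPa, hPx⟩ := hW h hh
  have hlab : ∀ x ∈ T, h x = y := fun x hx => hS (x, y) (hmem x hx)
  obtain ⟨p, hp, q, hq, r, hr, hpq, hpr, hqr, H⟩ := core s a (W h) T (by omega) (hP _ hPa)
    (fun x hx => hP _ ((hPx x).1 (hlab x hx)))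
  have her : ({(p, y), (q, y), (r, y)} : Finset (V × ℤ)).erase (p, y) = {(q, y), (r, y)} := by
    apply Finset.erase_insert
    simp [hpq, hpr]
  refine ⟨{(p, y), (q, y), (r, y)}, ?_, ?_, (p, y), by simp, ?_⟩
  · intro z hz
    simp only [Finset.mem_insert, Finset.mem_singleton] at hz
    rcases hz with rfl | rfl | rfl
    · exact hmem _ hp
    · exact hmem _ hq
    · exact hmem _ hr
  · rw [Finset.card_eq_three]
    exact ⟨_, _, _, by simp [hpq], by simp [hpr], by simp [hqr], rfl⟩
  · intro h' hh' e
    rw [her, hσ, hσ] at e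
    have e' := code_inj _ _ _ (A_mem _ _ (Finset.insert_nonempty _ _))
      (A_mem _ _ (Finset.insert_nonempty _ _)) e
    obtain ⟨P', hup', hP', hPa', hPx'⟩ := hW h' hh'.1
    have hfin := H (W h') P' hup' hP' hPa' (by
      intro x hx hxp
      rw [← hPx']
      refine hh'.2 (x, y) ?_
      rw [Finset.mem_coe, Finset.mem_erase]
      exact ⟨by simp [hxp], hmem x hx⟩) e'
    rw [← hPx'] at hfin
    exact ⟨hfin.trans (hlab p hp).symm, hlab p hp⟩

end Cert12

open Cert12 in
/-- For any distinct `s₊, s₋ ∈ ℝ²`, the class of two-dimensional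
`{(s₊,+1),(s₋,−1)}`-halfspaces has certificate dimension `3` with parameters
`(m, n) = (7, 3)`. -/
theorem stmt12 (sp sm : Fin 2 → ℝ) (hne : sp ≠ sm) :
    CertDim (Halfspaces sp sm) 3 7 3 := by
  choose! wp hwp using rep_pos sp sm
  choose! wm hwm using rep_neg sp sm
  let F : V → Finset (V × ℤ) → Finset V := fun a W => insert a (W.image Prod.fst)
  let σ : (V → ℤ) → Finset (V × ℤ) → ℕ := fun h W =>
    if ∀ p ∈ W, p.2 = 1 then code (F sp W) (A (wp h) (F sp W))
    else code (F sm W) (A (wm h) (F sm W))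
  refine ⟨σ, ?_, ?_⟩
  · intro h W hW
    have hF : ∀ a, (F a W).card ≤ 3 := by
      intro a
      have h1 := Finset.card_insert_le a (W.image Prod.fst)
      have h2 := Finset.card_image_le (s := W) (f := Prod.fst)
      simp only [F]
      omega
    simp only [σ]
    split_ifs
    · exact code_lt _ _ (hF _)
    · exact code_lt _ _ (hF _)
  · intro h hh S hS hcons
    have hlab : ∀ p ∈ S, p.2 ≠ 1 → p.2 = -1 := by
      intro p hp hne
      have := hcons p hp
      obtain ⟨w, b, _, _, rfl⟩ := hh
      simp only [signR] at this
      split_ifs at this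
      · exact absurd this.symm hne
      · exact this.symm
    have hsum := Finset.card_filter_add_card_filter_not (s := S) (fun p => p.2 = 1)
    by_cases h4 : 4 ≤ (S.filter (fun p => p.2 = 1)).card
    · refine side _ sm sp 1 wp hwp σ ?_ h hh S hcons h4
      intro h q r
      have hc : ∀ p ∈ ({(q, 1), (r, 1)} : Finset (V × ℤ)), p.2 = 1 := by
        intro p hp
        simp only [Finset.mem_insert, Finset.mem_singleton] at hp
        rcases hp with rfl | rfl <;> rfl
      simp only [σ]
      rw [if_pos hc]
      simp [F]
    · refine side _ sp sm (-1) wm hwm σ ?_ h hh S hcons ?_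
      · intro h q r
        have hc : ¬ ∀ p ∈ ({(q, -1), (r, -1)} : Finset (V × ℤ)), p.2 = 1 := by
          intro hp
          have := hp (q, -1) (by simp)
          norm_num at this
        simp only [σ]
        rw [if_neg hc]
        simp [F]
      · have : S.filter (fun p => ¬ p.2 = 1) ⊆ S.filter (fun p => p.2 = -1) := by
          intro p hp
          rw [Finset.mem_filter] at hp ⊢
          exact ⟨hp.1, hlab p hp.1 hp.2⟩
        have h3 := Finset.card_le_card this
        have h5 : 4 ≤ (S.filter (fun p => p.2 = -1)).card := by omega
        convert h5
end
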